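/- arXiv:2105.08455 — 12 statements merged into one kernel-verified Lean document; each statement's English description precedes it below -/
import Mathlib

section
/- For every integer n ≥ 1, the signed sum over all derangements π of [n] of the monomial obtained by multiplying x_j over all right-to-left minima values j of π and y_j over all excedance values j of π equals (-1)^(n-1) times the sum over j from 1 to n-1 of x_1⋯x_j · y_{j+1}⋯y_n. That is, ∑_{π ∈ D_n} (-1)^{inv(π)} (∏_{j ∈ RLMv(π)} x_j)(∏_{j ∈ EXCv(π)} y_j) = (-1)^{n-1} ∑_{j=1}^{n-1} x_1⋯x_j y_{j+1}⋯y_n, as an identity of polynomials in the commuting variables x_1,…,x_n,y_1,…,y_n. -/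
open Finset MvPolynomial

/-- Number of inversions of a permutation of `Fin n`
(pairs `p.1 < p.2` with `π p.1 > π p.2`). -/
def inversions {n : ℕ} (π : Equiv.Perm (Fin n)) : ℕ :=
  (Finset.univ.filter fun p : Fin n × Fin n => p.1 < p.2 ∧ π p.2 < π p.1).card

/-- Excedance indices of a permutation. -/
def EXCi {n : ℕ} (π : Equiv.Perm (Fin n)) : Finset (Fin n) :=
  Finset.univ.filter fun i => i < π i

/-- Excedance values of a permutation. -/
def EXCv {n : ℕ} (π : Equiv.Perm (Fin n)) : Finset (Fin n) :=
  (EXCi π).image π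

/-- Right-to-left minima indices of a permutation. -/
def RLMi {n : ℕ} (π : Equiv.Perm (Fin n)) : Finset (Fin n) :=
  Finset.univ.filter fun i => ∀ j, i < j → π i < π j

/-- Right-to-left minima values of a permutation. -/
def RLMv {n : ℕ} (π : Equiv.Perm (Fin n)) : Finset (Fin n) :=
  (RLMi π).image π

/-- The derangements of `Fin n`, i.e. permutations with no fixed point. -/
def derangementsF (n : ℕ) : Finset (Equiv.Perm (Fin n)) :=
  Finset.univ.filter fun π => ∀ i, π i ≠ i

namespace DerAux

variable {n : ℕ}

/-- record positions -/
def Rec (σ : Equiv.Perm (Fin n)) (j : Fin n) : Prop := ∀ k, k < j → σ k < σ j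

/-- no two anti-excedances crossing a common cut -/
def Good (σ : Equiv.Perm (Fin n)) : Prop := ∀ i j, i < j → σ i < i → i ≤ σ j

/-- lexicographically first bad pair -/
def MinBad (σ : Equiv.Perm (Fin n)) (i j : Fin n) : Prop :=
  (i < j ∧ σ i < i ∧ σ j < i) ∧ (∀ k l, k < l → σ k < k → σ l < k → i ≤ k) ∧
    (∀ l, i < l → σ l < i → j ≤ l)

/-- first place where an anti-excedance is followed by an excedance -/
def Fst (σ : Equiv.Perm (Fin n)) (a b : Fin n) : Prop :=
  (b.val = a.val + 1 ∧ σ a < a ∧ ¬ σ b < b) ∧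
    (∀ c d : Fin n, d.val = c.val + 1 → σ c < c → ¬ σ d < d → a ≤ c)

open Classical in
/-- weight -/
noncomputable def wt (σ : Equiv.Perm (Fin n)) : MvPolynomial (Fin n ⊕ Fin n) ℤ :=
  (((Equiv.Perm.sign σ : ℤˣ) : ℤ) : MvPolynomial (Fin n ⊕ Fin n) ℤ)
    * (∏ j ∈ univ.filter (fun j => Rec σ j), X (Sum.inl j))
    * (∏ j ∈ univ.filter (fun j => σ j < j), X (Sum.inr j))

lemma neg_one_pow_inversions (σ : Equiv.Perm (Fin n)) :
    (-1 : ℤ) ^ inversions σ = ((Equiv.Perm.sign σ : ℤˣ) : ℤ) := by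
  rw [Equiv.Perm.sign_eq_prod_prod_Iio]
  push_cast
  rw [inversions, ← Finset.prod_const, Finset.prod_filter]
  rw [← Finset.univ_product_univ, Finset.prod_product_right]
  apply Finset.prod_congr rfl
  intro j _
  rw [← Finset.prod_subset (Finset.subset_univ (Finset.Iio j))]
  · apply Finset.prod_congr rfl
    intro i hi
    rw [Finset.mem_Iio] at hi
    have : σ i ≠ σ j := fun h => hi.ne (σ.injective h)
    by_cases h : σ i < σ j
    · simp [hi, h, not_lt.2 h.le]
    · have : σ j < σ i := lt_of_le_of_ne (not_lt.1 h) this.symm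
      simp [hi, h, this]
  · intro i _ hi
    rw [Finset.mem_Iio] at hi
    simp [hi]

lemma sum_cancel (s : Finset (Equiv.Perm (Fin n)))
    (f : Equiv.Perm (Fin n) → MvPolynomial (Fin n ⊕ Fin n) ℤ)
    (Q : Equiv.Perm (Fin n) → Fin n → Fin n → Prop)
    (T : Equiv.Perm (Fin n) → Fin n → Fin n → Equiv.Perm (Fin n))
    (hT : ∀ σ i j, i ≠ j → T σ i j ≠ σ)
    (hTT : ∀ σ i j, T (T σ i j) i j = σ)
    (ex : ∀ σ ∈ s, ∃ p : Fin n × Fin n, Q σ p.1 p.2)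
    (uniq : ∀ σ i j k l, Q σ i j → Q σ k l → i = k ∧ j = l)
    (step : ∀ σ ∈ s, ∀ i j, Q σ i j → i ≠ j ∧ T σ i j ∈ s ∧ Q (T σ i j) i j ∧
      f (T σ i j) = - f σ) : ∑ σ ∈ s, f σ = 0 := by
  choose p hp using ex
  refine Finset.sum_involution (fun σ hσ => T σ (p σ hσ).1 (p σ hσ).2) ?_ ?_ ?_ ?_
  · intro σ hσ
    rw [(step σ hσ _ _ (hp σ hσ)).2.2.2]; ring
  · intro σ hσ _
    exact hT _ _ _ (step σ hσ _ _ (hp σ hσ)).1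
  · intro σ hσ
    exact (step σ hσ _ _ (hp σ hσ)).2.1
  · intro σ hσ
    have h := step σ hσ _ _ (hp σ hσ)
    have := uniq _ _ _ _ _ (hp _ h.2.1) h.2.2.1
    simp only [this.1, this.2, hTT]

lemma Rec.le {σ : Equiv.Perm (Fin n)} {j : Fin n} (h : Rec σ j) : j ≤ σ j := by
  have : (Finset.Iio j).card ≤ (Finset.Iio (σ j)).card := by
    apply Finset.card_le_card_of_injOn σ
    · intro k hk
      simp only [Finset.coe_Iio, Set.mem_Iio] at hk ⊢
      exact h k hk
    · exact σ.injective.injOn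
  simpa using this

lemma Good.le {σ : Equiv.Perm (Fin n)} (g : Good σ) {e t : Fin n} (het : e < t)
    (ht : t < σ t) : σ e ≤ t := by
  by_contra hc
  rw [not_le] at hc
  have key : (univ.filter fun i => i ≤ t ∧ t < σ i).card =
      (univ.filter fun i => t < i ∧ σ i ≤ t).card := by
    have h1 : (univ.filter fun i => i ≤ t ∧ t < σ i).card +
        (univ.filter fun i => i ≤ t ∧ σ i ≤ t).card = (univ.filter fun i => i ≤ t).card := by
      rw [← Finset.card_union_of_disjoint]
      · congr 1; ext i; simp; grind
      · rw [Finset.disjoint_left]; intro i; simp; grind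
    have h2 : (univ.filter fun i => t < i ∧ σ i ≤ t).card +
        (univ.filter fun i => i ≤ t ∧ σ i ≤ t).card = (univ.filter fun i => σ i ≤ t).card := by
      rw [← Finset.card_union_of_disjoint]
      · congr 1; ext i; simp; grind
      · rw [Finset.disjoint_left]; intro i; simp; grind
    have h3 : (univ.filter fun i => σ i ≤ t).card = (univ.filter fun i => i ≤ t).card := by
      apply Finset.card_bij (fun i _ => σ i)
      · intro i; simp
      · intro i _ j _ h; exact σ.injective h
      · intro i hi; exact ⟨σ.symm i, by simpa using hi, by simp⟩
    omega
  have h1 : 1 < (univ.filter fun i => i ≤ t ∧ t < σ i).card := by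
    rw [Finset.one_lt_card]
    exact ⟨e, by simp [het.le, hc], t, by simp [ht], het.ne⟩
  rw [key, Finset.one_lt_card] at h1
  obtain ⟨a, ha, b, hb, hab⟩ := h1
  simp only [Finset.mem_filter, Finset.mem_univ, true_and] at ha hb
  rcases lt_or_gt_of_ne hab with h | h
  · have := g a b h (ha.2.trans_lt ha.1)
    exact absurd (this.trans hb.2) (not_le.2 ha.1)
  · have := g b a h (hb.2.trans_lt hb.1)
    exact absurd (this.trans ha.2) (not_le.2 hb.1)

lemma Good.rec_iff {σ : Equiv.Perm (Fin n)} (g : Good σ) (d : ∀ i, σ i ≠ i) (j : Fin n) :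
    Rec σ j ↔ ¬ σ j < j := by
  constructor
  · intro h; exact not_lt.2 h.le
  · intro h k hk
    have hj : j < σ j := lt_of_le_of_ne (not_lt.1 h) (d j).symm
    exact (g.le hk hj).trans_lt hj

lemma rec_swap {σ : Equiv.Perm (Fin n)} {i j : Fin n}
    (hij : i < j) (hi : σ i < i) (hj : σ j < i) (k : Fin n) (h : Rec σ k) :
    Rec (σ * Equiv.swap i j) k := by
  have hk := h.le
  have hki : k ≠ i := by rintro rfl; exact absurd hi (not_lt.2 hk)
  have hkj : k ≠ j := by rintro rfl; exact absurd (hj.trans hij) (not_lt.2 hk)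
  intro l hl
  rw [Equiv.Perm.mul_apply, Equiv.Perm.mul_apply, Equiv.swap_apply_of_ne_of_ne hki hkj]
  by_cases h1 : l = i
  · subst h1; rw [Equiv.swap_apply_left]; exact hj.trans (hl.trans_le hk)
  by_cases h2 : l = j
  · subst h2; rw [Equiv.swap_apply_right]; exact hi.trans (hij.trans (hl.trans_le hk))
  rw [Equiv.swap_apply_of_ne_of_ne h1 h2]; exact h l hl

open Classical in
lemma wt_neg {σ τ : Equiv.Perm (Fin n)} (hs : Equiv.Perm.sign τ = - Equiv.Perm.sign σ)
    (hr : ∀ j, Rec τ j ↔ Rec σ j) (ha : ∀ j, τ j < j ↔ σ j < j) : wt τ = - wt σ := by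
  have h1 : (univ.filter fun j => Rec τ j) = univ.filter fun j => Rec σ j := by
    ext j; rw [Finset.mem_filter, Finset.mem_filter, hr]
  unfold wt
  rw [h1]
  simp only [ha, hs]
  push_cast
  ring

lemma exists_minBad {σ : Equiv.Perm (Fin n)} (h : ¬ Good σ) :
    ∃ p : Fin n × Fin n, MinBad σ p.1 p.2 := by
  classical
  have h1 : (univ.filter fun i => ∃ j, i < j ∧ σ i < i ∧ σ j < i).Nonempty := by
    unfold Good at h
    push Not at h
    obtain ⟨i, j, a, b, c⟩ := h
    exact ⟨i, by simp only [Finset.mem_filter, Finset.mem_univ, true_and]; exact ⟨j, a, b, c⟩⟩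
  obtain ⟨i, hi, hmin⟩ := Finset.exists_min_image _ id h1
  simp only [Finset.mem_filter, Finset.mem_univ, true_and, id] at hi hmin
  have h2 : (univ.filter fun j => i < j ∧ σ j < i).Nonempty := by
    obtain ⟨j, a, b, c⟩ := hi
    exact ⟨j, by simp [a, c]⟩
  obtain ⟨j, hj, hmin2⟩ := Finset.exists_min_image _ id h2
  simp only [Finset.mem_filter, Finset.mem_univ, true_and, id] at hj hmin2
  refine ⟨(i, j), ⟨hj.1, ?_, hj.2⟩, ?_, ?_⟩
  · obtain ⟨j, a, b, c⟩ := hi; exact b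
  · intro k l a b c; exact hmin k ⟨l, a, b, c⟩
  · intro l a b; exact hmin2 l ⟨a, b⟩

lemma minBad_uniq (σ : Equiv.Perm (Fin n)) (i j k l : Fin n)
    (h : MinBad σ i j) (h' : MinBad σ k l) : i = k ∧ j = l := by
  obtain ⟨⟨a, b, c⟩, d, e⟩ := h
  obtain ⟨⟨a', b', c'⟩, d', e'⟩ := h'
  have : i = k := le_antisymm (d _ _ a' b' c') (d' _ _ a b c)
  subst this
  exact ⟨rfl, le_antisymm (e _ a' c') (e' _ a c)⟩

lemma swap_cases (σ : Equiv.Perm (Fin n)) (i j k : Fin n) :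
    (k = i ∧ (σ * Equiv.swap i j) k = σ j) ∨ (k = j ∧ (σ * Equiv.swap i j) k = σ i) ∨
    (k ≠ i ∧ k ≠ j ∧ (σ * Equiv.swap i j) k = σ k) := by
  by_cases h1 : k = i
  · left; subst h1; simp
  by_cases h2 : k = j
  · right; left; subst h2; simp
  · right; right; exact ⟨h1, h2, by simp [Equiv.swap_apply_of_ne_of_ne h1 h2]⟩

lemma minBad_swap {σ : Equiv.Perm (Fin n)} {i j : Fin n} (h : MinBad σ i j) :
    MinBad (σ * Equiv.swap i j) i j := by
  obtain ⟨⟨a, b, c⟩, d, e⟩ := h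
  refine ⟨⟨a, by simpa using c, by simpa using b⟩, ?_, ?_⟩
  · intro k l hkl hk hl
    by_contra hlt
    rw [not_le] at hlt
    rcases swap_cases σ i j k with ⟨h1, h2⟩ | ⟨h1, h2⟩ | ⟨h1, h1', h2⟩
    · exact hlt.ne h1
    · exact absurd (h1 ▸ hlt) (not_lt.2 a.le)
    rw [h2] at hk
    rcases swap_cases σ i j l with ⟨h3, h4⟩ | ⟨h3, h4⟩ | ⟨h3, h3', h4⟩ <;> rw [h4] at hl
    · exact absurd (d k j (hlt.trans a) hk hl) (not_le.2 hlt)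
    · exact absurd (d k i hlt hk hl) (not_le.2 hlt)
    · exact absurd (d k l hkl hk hl) (not_le.2 hlt)
  · intro l hl hl'
    rcases swap_cases σ i j l with ⟨h3, h4⟩ | ⟨h3, h4⟩ | ⟨h3, h3', h4⟩ <;> rw [h4] at hl'
    · exact absurd h3 hl.ne'
    · exact h3.ge
    · exact e l hl hl'

open Classical in
lemma sum_bad : ∑ σ ∈ (derangementsF n).filter (fun σ => ¬ Good σ), wt σ = 0 := by
  apply sum_cancel _ _ MinBad (fun σ i j => σ * Equiv.swap i j)
  · intro σ i j hij h
    have := mul_eq_left.1 h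
    exact hij (Equiv.swap_eq_one_iff.1 this)
  · intro σ i j; simp [mul_assoc]
  · intro σ hσ
    exact exists_minBad (Finset.mem_filter.1 hσ).2
  · exact minBad_uniq
  · intro σ hσ i j h
    have hb := minBad_swap h
    have h0 := h
    obtain ⟨⟨a, b, c⟩, -, -⟩ := h
    refine ⟨a.ne, ?_, hb, ?_⟩
    · simp only [derangementsF, Finset.mem_filter, Finset.mem_univ, true_and] at hσ ⊢
      refine ⟨?_, ?_⟩
      · intro k
        rcases swap_cases σ i j k with ⟨h1, h2⟩ | ⟨h1, h2⟩ | ⟨h1, h1', h2⟩ <;> rw [h2]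
        · rw [h1]; exact c.ne
        · rw [h1]; exact (b.trans a).ne
        · exact hσ.1 k
      · intro g
        exact absurd (g i j a hb.1.2.1) (not_le.2 hb.1.2.2)
    · apply wt_neg
      · rw [Equiv.Perm.sign_mul, Equiv.Perm.sign_swap a.ne]; simp
      · intro k
        constructor
        · intro hk
          have := rec_swap a hb.1.2.1 hb.1.2.2 k hk
          simpa [mul_assoc] using this
        · exact rec_swap a b c k
      · intro k
        rcases swap_cases σ i j k with ⟨h1, h2⟩ | ⟨h1, h2⟩ | ⟨h1, h1', h2⟩ <;> rw [h2]
        · rw [h1]; simp [b, c]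
        · rw [h1]; simp [b.trans a, c.trans a]

lemma lswap_lt {a b i v : Fin n} (hb : b.val = a.val + 1) (hi : i ≠ b) :
    Equiv.swap a b v < i ↔ v < i := by
  rw [Equiv.swap_apply_def]
  split_ifs <;> grind

lemma lswap_eq {a b i v : Fin n} (hb : b.val = a.val + 1) (hi : i ≠ b) (hi' : i ≠ a)
    (h : v ≠ i) : Equiv.swap a b v ≠ i := by
  rw [Equiv.swap_apply_def]
  split_ifs <;> grind

lemma lswap_stuff {σ : Equiv.Perm (Fin n)} (d : ∀ i, σ i ≠ i) {a b : Fin n}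
    (hb : b.val = a.val + 1) (h1 : σ a < a) (h2 : ¬ σ b < b) :
    (∀ i, (Equiv.swap a b * σ) i < i ↔ σ i < i) ∧ (∀ i, (Equiv.swap a b * σ) i ≠ i) := by
  have ea : Equiv.swap a b (σ a) = σ a := by
    apply Equiv.swap_apply_of_ne_of_ne <;> grind
  have eb : Equiv.swap a b (σ b) = σ b := by
    have := d b
    apply Equiv.swap_apply_of_ne_of_ne <;> grind
  constructor
  · intro i
    rw [Equiv.Perm.mul_apply]
    by_cases hi : i = b
    · rw [hi, eb]
    · exact lswap_lt hb hi
  · intro i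
    rw [Equiv.Perm.mul_apply]
    by_cases hi : i = b
    · rw [hi, eb]; exact d b
    by_cases hi' : i = a
    · rw [hi', ea]; exact d a
    exact lswap_eq hb hi hi' (d i)

open Classical in
lemma sum_fst : ∑ σ ∈ ((derangementsF n).filter (fun σ => Good σ)).filter
    (fun σ => ∃ p : Fin n × Fin n, Fst σ p.1 p.2), wt σ = 0 := by
  apply sum_cancel _ _ Fst (fun σ i j => Equiv.swap i j * σ)
  · intro σ i j hij h
    have := mul_eq_right.1 h
    exact hij (Equiv.swap_eq_one_iff.1 this)
  · intro σ i j; simp [← mul_assoc]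
  · intro σ hσ
    exact (Finset.mem_filter.1 hσ).2
  · rintro σ a b c d ⟨⟨h1, h2, h3⟩, h4⟩ ⟨⟨h1', h2', h3'⟩, h4'⟩
    have : a = c := le_antisymm (h4 _ _ h1' h2' h3') (h4' _ _ h1 h2 h3)
    subst this
    exact ⟨rfl, Fin.ext (by omega)⟩
  · intro σ hσ a b h
    simp only [derangementsF, Finset.mem_filter, Finset.mem_univ, true_and] at hσ ⊢
    obtain ⟨⟨hd, hg⟩, -⟩ := hσ
    obtain ⟨⟨h1, h2, h3⟩, h4⟩ := h
    obtain ⟨hlt, hd'⟩ := lswap_stuff hd h1 h2 h3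
    have hab : a ≠ b := by rintro rfl; omega
    have hF : Fst (Equiv.swap a b * σ) a b := by
      unfold Fst
      simp only [hlt]
      exact ⟨⟨h1, h2, h3⟩, h4⟩
    have hg' : Good (Equiv.swap a b * σ) := by
      intro i j hij hi
      rw [hlt] at hi
      have hib : i ≠ b := by rintro rfl; exact h3 hi
      have := hg i j hij hi
      rw [← not_lt] at this ⊢
      rwa [Equiv.Perm.mul_apply, lswap_lt h1 hib]
    refine ⟨hab, ⟨⟨hd', hg'⟩, ⟨(a, b), hF⟩⟩, hF, ?_⟩
    apply wt_neg
    · rw [Equiv.Perm.sign_mul, Equiv.Perm.sign_swap hab]; simp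
    · intro j; rw [hg'.rec_iff hd', hg.rec_iff hd, hlt]
    · exact hlt

/-- the surviving permutation, as a function -/
def cf (n j : ℕ) (hj : 1 ≤ j) (hj' : j ≤ n - 1) (i : Fin n) : Fin n :=
  ⟨if i.val + 1 < j then i.val + 1 else if i.val + 1 = j then n - 1 else
    if i.val = j then 0 else i.val - 1, by split_ifs <;> omega⟩

lemma cf_inj (n j : ℕ) (hj : 1 ≤ j) (hj' : j ≤ n - 1) : Function.Injective (cf n j hj hj') := by
  intro a b h
  have h := congrArg Fin.val h
  have := a.2
  have := b.2
  simp only [cf] at h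
  apply Fin.ext
  split_ifs at h <;> omega

noncomputable def cyc (n j : ℕ) (hj : 1 ≤ j) (hj' : j ≤ n - 1) : Equiv.Perm (Fin n) :=
  Equiv.ofBijective (cf n j hj hj') (Finite.injective_iff_bijective.1 (cf_inj n j hj hj'))

lemma cyc_val (n j : ℕ) (hj : 1 ≤ j) (hj' : j ≤ n - 1) (i : Fin n) :
    (cyc n j hj hj' i).val = if i.val + 1 < j then i.val + 1 else if i.val + 1 = j then n - 1 else
    if i.val = j then 0 else i.val - 1 := rfl

lemma cyc_lt (n j : ℕ) (hj : 1 ≤ j) (hj' : j ≤ n - 1) (i : Fin n) :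
    cyc n j hj hj' i < i ↔ ¬ i.val < j := by
  rw [Fin.lt_def, cyc_val]
  split_ifs <;> omega

lemma cyc_ne (n j : ℕ) (hj : 1 ≤ j) (hj' : j ≤ n - 1) (i : Fin n) :
    cyc n j hj hj' i ≠ i := by
  rw [Ne, Fin.ext_iff, cyc_val]
  split_ifs <;> omega

lemma cyc_good (n j : ℕ) (hj : 1 ≤ j) (hj' : j ≤ n - 1) : Good (cyc n j hj hj') := by
  intro a b hab ha
  rw [cyc_lt] at ha
  rw [Fin.lt_def] at hab
  rw [Fin.le_def, cyc_val]
  split_ifs <;> omega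

lemma cyc_inv (n j : ℕ) (hj : 1 ≤ j) (hj' : j ≤ n - 1) : inversions (cyc n j hj hj') = n - 1 := by
  let J : Fin n := ⟨j, by omega⟩
  let K : Fin n := ⟨j - 1, by omega⟩
  have : (univ.filter fun p : Fin n × Fin n => p.1 < p.2 ∧
      cyc n j hj hj' p.2 < cyc n j hj hj' p.1) = (Finset.Iio J ×ˢ {J}) ∪ ({K} ×ˢ Finset.Ioi J) := by
    ext ⟨a, b⟩
    have := a.2
    have := b.2
    simp only [Finset.mem_filter, Finset.mem_univ, true_and, Finset.mem_union, Finset.mem_product,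
      Finset.mem_Iio, Finset.mem_Ioi, Finset.mem_singleton, Fin.lt_def, Fin.ext_iff, cyc_val, J, K]
    split_ifs <;> omega
  rw [inversions, this, Finset.card_union_of_disjoint]
  · simp [J]; omega
  · rw [Finset.disjoint_left]
    rintro ⟨a, b⟩
    simp only [Finset.mem_product, Finset.mem_Iio, Finset.mem_Ioi, Finset.mem_singleton]
    rintro ⟨_, rfl⟩ ⟨_, h⟩
    exact lt_irrefl _ h

lemma cyc_wt (n j : ℕ) (hj : 1 ≤ j) (hj' : j ≤ n - 1) : wt (cyc n j hj hj') =
    (-1) ^ (n - 1) * ∏ i : Fin n,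
            (if (i : ℕ) < j then (X (Sum.inl i) : MvPolynomial (Fin n ⊕ Fin n) ℤ)
             else X (Sum.inr i)) := by
  unfold wt
  rw [← neg_one_pow_inversions, cyc_inv]
  simp only [(cyc_good n j hj hj').rec_iff (cyc_ne n j hj hj'), cyc_lt, not_not]
  rw [Finset.prod_ite, mul_assoc]
  push_cast
  rfl

lemma cyc_surj (hn : 1 ≤ n) {σ : Equiv.Perm (Fin n)} (d : ∀ i, σ i ≠ i) (g : Good σ)
    (hA : ∀ c d : Fin n, d.val = c.val + 1 → σ c < c → σ d < d) :
    ∃ j, ∃ hj : 1 ≤ j, ∃ hj' : j ≤ n - 1, cyc n j hj hj' = σ := by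
  classical
  have hex : ∃ j, ∃ h : j < n, σ ⟨j, h⟩ < ⟨j, h⟩ := by
    refine ⟨n - 1, by omega, ?_⟩
    have := d ⟨n - 1, by omega⟩
    have h2 := (σ ⟨n - 1, by omega⟩).2
    rw [Ne, Fin.ext_iff] at this
    rw [Fin.lt_def]
    simp only at this ⊢
    omega
  obtain ⟨hjn, hj⟩ := Nat.find_spec hex
  have hmin : ∀ i : Fin n, i.val < Nat.find hex → i < σ i := by
    intro i hi
    have := Nat.find_min hex hi
    have h3 : ¬ σ i < i := fun h => this ⟨i.2, h⟩
    exact lt_of_le_of_ne (not_lt.1 h3) (d i).symm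
  generalize Nat.find hex = j at *
  have hj1 : 1 ≤ j := by
    rw [Fin.lt_def] at hj; simp only at hj; omega
  have hup : ∀ k, ∀ h : k < n, j ≤ k → σ ⟨k, h⟩ < ⟨k, h⟩ := by
    intro k
    induction k with
    | zero => intro h h'; omega
    | succ k ih =>
      intro h h'
      rcases Nat.lt_or_ge k j with h4 | h4
      · have : j = k + 1 := by omega
        subst this; exact hj
      · exact hA ⟨k, by omega⟩ _ rfl (ih (by omega) h4)
  have hE : ∀ i : Fin n, i.val + 1 < j → (σ i).val = i.val + 1 := by
    intro i hi
    have h1 := hmin i (by omega)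
    have h2 := g.le (e := i) (t := ⟨i.val + 1, by omega⟩) (by rw [Fin.lt_def]; simp)
      (hmin _ (by simpa using hi))
    rw [Fin.lt_def] at h1
    rw [Fin.le_def] at h2
    simp only at h2
    omega
  have hAA : ∀ i : Fin n, j < i.val → (σ i).val = i.val - 1 := by
    intro i hi
    have h1 := hup i.val i.2 hi.le
    have h2 := g ⟨i.val - 1, by omega⟩ i (by rw [Fin.lt_def]; simp only; omega)
      (hup _ _ (by omega))
    rw [Fin.lt_def] at h1
    rw [Fin.le_def] at h2
    simp only [Fin.eta] at h1 h2
    omega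
  refine ⟨j, hj1, by omega, ?_⟩
  ext i
  rw [cyc_val]
  have hi := i.2
  split_ifs with h1 h2 h3
  · exact (hE i h1).symm
  · have h5 := hmin i (by omega)
    rw [Fin.lt_def] at h5
    by_contra hne
    have hv := (σ i).2
    have h6 := hAA ⟨(σ i).val + 1, by omega⟩ (by simp only; omega)
    have h7 : σ ⟨(σ i).val + 1, by omega⟩ = σ i := Fin.ext (by rw [h6]; simp)
    have h8 := congrArg Fin.val (σ.injective h7)
    simp only at h8
    omega
  · have h5 := hup i.val i.2 h3.ge
    rw [Fin.lt_def] at h5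
    simp only [Fin.eta] at h5
    by_contra hne
    have h6 := hE ⟨(σ i).val - 1, by omega⟩ (by simp only; omega)
    have h7 : σ ⟨(σ i).val - 1, by omega⟩ = σ i := Fin.ext (by rw [h6]; simp only; omega)
    have h8 := congrArg Fin.val (σ.injective h7)
    simp only at h8
    omega
  · exact (hAA i (by omega)).symm

open Classical in
lemma sum_wt (hn : 1 ≤ n) : ∑ σ ∈ derangementsF n, wt σ = (-1) ^ (n - 1) *
        ∑ j ∈ Finset.Icc 1 (n - 1),
          ∏ i : Fin n,
            (if (i : ℕ) < j then (X (Sum.inl i) : MvPolynomial (Fin n ⊕ Fin n) ℤ)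
             else X (Sum.inr i)) := by
  rw [← Finset.sum_filter_add_sum_filter_not (derangementsF n) (fun σ => Good σ), sum_bad, add_zero,
    ← Finset.sum_filter_add_sum_filter_not ((derangementsF n).filter (fun σ => Good σ))
      (fun σ => ∃ p : Fin n × Fin n, Fst σ p.1 p.2), sum_fst, zero_add, Finset.mul_sum]
  symm
  refine Finset.sum_bij
    (fun j hj => cyc n j (Finset.mem_Icc.1 hj).1 (Finset.mem_Icc.1 hj).2) ?_ ?_ ?_ ?_
  · intro j hj
    simp only [derangementsF, Finset.mem_filter, Finset.mem_univ, true_and]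
    refine ⟨⟨cyc_ne _ _ _ _, cyc_good _ _ _ _⟩, ?_⟩
    rintro ⟨p, ⟨h1, h2, h3⟩, -⟩
    rw [cyc_lt] at h2 h3
    omega
  · intro j hj k hk h
    rw [Finset.mem_Icc] at hj hk
    by_contra hne
    have key : ∀ i : Fin n, ¬ i.val < j ↔ ¬ i.val < k := by
      intro i
      rw [← cyc_lt n j hj.1 hj.2, ← cyc_lt n k hk.1 hk.2]
      rw [h]
    have h1 := key ⟨j, by omega⟩
    have h2 := key ⟨k, by omega⟩
    simp only at h1 h2
    omega
  · intro σ hσ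
    simp only [derangementsF, Finset.mem_filter, Finset.mem_univ, true_and] at hσ
    obtain ⟨⟨hd, hg⟩, hF⟩ := hσ
    obtain ⟨j, hj, hj', h⟩ := cyc_surj hn hd hg (by
      by_contra hc
      push Not at hc
      have h1 : (univ.filter fun c : Fin n =>
          ∃ d : Fin n, d.val = c.val + 1 ∧ σ c < c ∧ ¬ σ d < d).Nonempty := by
        obtain ⟨c, d, a1, a2, a3⟩ := hc
        exact ⟨c, by
          simp only [Finset.mem_filter, Finset.mem_univ, true_and]
          exact ⟨d, a1, a2, not_lt.2 a3⟩⟩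
      obtain ⟨a, ha, hmin⟩ := Finset.exists_min_image _ id h1
      simp only [Finset.mem_filter, Finset.mem_univ, true_and, id] at ha hmin
      obtain ⟨b, hb⟩ := ha
      exact hF ⟨(a, b), hb, fun c d x y z => hmin c ⟨d, x, y, z⟩⟩)
    exact ⟨j, Finset.mem_Icc.2 ⟨hj, hj'⟩, h⟩
  · intro j hj
    rw [cyc_wt]

end DerAux

/-- Here `Fin n` represents `[n] = {1,…,n}` via `i ↦ i + 1`; the variable
`X (Sum.inl i)` is `x_{i+1}` and `X (Sum.inr i)` is `y_{i+1}`. -/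
theorem stmt0 (n : ℕ) (hn : 1 ≤ n) :
    ∑ π ∈ derangementsF n,
      ((-1 : MvPolynomial (Fin n ⊕ Fin n) ℤ) ^ inversions π)
        * (∏ j ∈ RLMv π, X (Sum.inl j))
        * (∏ j ∈ EXCv π, X (Sum.inr j))
    = (-1) ^ (n - 1) *
        ∑ j ∈ Finset.Icc 1 (n - 1),
          ∏ i : Fin n,
            (if (i : ℕ) < j then (X (Sum.inl i) : MvPolynomial (Fin n ⊕ Fin n) ℤ)
             else X (Sum.inr i)) := by
  classical
  rw [← DerAux.sum_wt hn]
  refine Finset.sum_bij (fun π _ => π⁻¹) ?_ ?_ ?_ ?_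
  · intro π h
    simp only [derangementsF, Finset.mem_filter, Finset.mem_univ, true_and] at h ⊢
    intro i hi
    exact h i (Equiv.Perm.inv_eq_iff_eq.1 hi).symm
  · intro a _ b _ h
    exact inv_injective h
  · intro π h
    refine ⟨π⁻¹, ?_, inv_inv _⟩
    simp only [derangementsF, Finset.mem_filter, Finset.mem_univ, true_and] at h ⊢
    intro i hi
    exact h i (Equiv.Perm.inv_eq_iff_eq.1 hi).symm
  · intro π _
    unfold DerAux.wt
    have inv1 : ∀ i, π⁻¹ (π i) = i := fun i => by simp
    have inv2 : ∀ i, π (π⁻¹ i) = i := fun i => by simp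
    have h1 : RLMv π = univ.filter (fun j => DerAux.Rec π⁻¹ j) := by
      ext j
      simp only [RLMv, RLMi, Finset.mem_image, Finset.mem_filter, Finset.mem_univ, true_and]
      unfold DerAux.Rec
      constructor
      · rintro ⟨i, hi, rfl⟩ k hk
        rw [inv1]
        by_contra hc
        rw [not_lt] at hc
        rcases hc.lt_or_eq with h | h
        · have := hi _ h
          rw [inv2] at this
          exact lt_asymm hk this
        · rw [h, inv2] at hk
          exact lt_irrefl _ hk
      · intro h
        refine ⟨π⁻¹ j, ?_, inv2 _⟩
        intro k hk
        rw [inv2]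
        by_contra hc
        rw [not_lt] at hc
        rcases hc.lt_or_eq with h' | h'
        · have := h _ h'
          rw [inv1] at this
          exact lt_asymm hk this
        · rw [← h', inv1] at hk
          exact lt_irrefl _ hk
    have h2 : EXCv π = univ.filter (fun j => π⁻¹ j < j) := by
      ext j
      simp only [EXCv, EXCi, Finset.mem_image, Finset.mem_filter, Finset.mem_univ, true_and]
      constructor
      · rintro ⟨i, hi, rfl⟩
        rwa [inv1]
      · intro h
        exact ⟨π⁻¹ j, by rwa [inv2], inv2 _⟩
    rw [h1, h2, Equiv.Perm.sign_inv, ← DerAux.neg_one_pow_inversions]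
    push_cast
    rfl
end

section
/- For every integer n ≥ 1, the signed sum over all derangements π of [n] of the monomial obtained by multiplying x_j over all right-to-left minima indices j of π and y_j over all excedance indices j of π equals (-1)^(n-1) times the sum over j from 1 to n-1 of y_1⋯y_j · x_{j+1}⋯x_n. That is, ∑_{π ∈ D_n} (-1)^{inv(π)} (∏_{j ∈ RLMi(π)} x_j)(∏_{j ∈ EXCi(π)} y_j) = (-1)^{n-1} ∑_{j=1}^{n-1} y_1⋯y_j x_{j+1}⋯x_n, as an identity of polynomials in the commuting variables x_1,…,x_n,y_1,…,y_n. -/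
open Finset MvPolynomial

/-- Bidiagonal matrix with an arbitrary first column. -/
def bidiag {R : Type*} [CommRing R] {m : ℕ} (c x y : Fin (m + 1) → R) :
    Matrix (Fin (m + 1)) (Fin (m + 1)) R :=
  Matrix.of fun i j => Fin.cases (c i)
    (fun k : Fin m => if i = k.castSucc then y i else if i = k.succ then - x i else 0) j

lemma bidiag_zero {R : Type*} [CommRing R] {m : ℕ} (c x y : Fin (m + 1) → R) (i : Fin (m + 1)) :
    bidiag c x y i 0 = c i := rfl

lemma bidiag_succ {R : Type*} [CommRing R] {m : ℕ} (c x y : Fin (m + 1) → R) (i : Fin (m + 1))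
    (k : Fin m) : bidiag c x y i k.succ =
      if i = k.castSucc then y i else if i = k.succ then - x i else 0 := rfl

lemma bidiag_det {R : Type*} [CommRing R] {m : ℕ} (c x y : Fin (m + 1) → R) :
    (bidiag c x y).det =
      ∑ j, c j * ∏ i, (if i < j then - y i else if j < i then - x i else 1) := by
  induction m with
  | zero => simp [bidiag_zero]
  | succ m ih =>
    rw [Matrix.det_succ_row_zero, Fin.sum_univ_succ, Fin.sum_univ_succ]
    have h0 : ((bidiag c x y).submatrix Fin.succ (Fin.succAbove 0)).det
        = ∏ i : Fin (m + 1), (- x i.succ) := by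
      rw [Matrix.det_of_isUpperTriangular]
      · refine Finset.prod_congr rfl fun i _ => ?_
        simp only [Matrix.submatrix_apply, Fin.zero_succAbove, bidiag_succ]
        rw [if_neg (by simp [Fin.ext_iff])]
        simp
      · intro i j hij
        simp only [id] at hij
        simp only [Matrix.submatrix_apply, Fin.zero_succAbove, bidiag_succ]
        have hij' : j.val < i.val := hij
        rw [if_neg (by simp only [Fin.ext_iff, Fin.val_succ, Fin.val_castSucc]; omega),
          if_neg (by simp only [Fin.ext_iff, Fin.val_succ]; omega)]
    have h1 : ((bidiag c x y).submatrix Fin.succ (Fin.succAbove (Fin.succ 0))).det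
        = (bidiag (fun i => c i.succ) (fun i => x i.succ) (fun i => y i.succ)).det := by
      congr 1
      ext i j
      refine Fin.cases ?_ (fun k => ?_) j
      · simp [bidiag_zero]
      · simp only [Matrix.submatrix_apply, Fin.succ_succAbove_succ, Fin.zero_succAbove, bidiag_succ]
        simp [Fin.ext_iff]
    have h2 : ∀ k : Fin m, bidiag c x y 0 k.succ.succ = 0 := by
      intro k
      rw [bidiag_succ, if_neg (by simp [Fin.ext_iff]), if_neg (by simp [Fin.ext_iff])]
    have h3 : bidiag c x y 0 (Fin.succ 0) = y 0 := by
      rw [bidiag_succ, if_pos (by simp)]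
    rw [h0, h1, ih, h3, bidiag_zero]
    simp only [h2, mul_zero, zero_mul, Finset.sum_const_zero, add_zero]
    rw [Fin.sum_univ_succ (n := m + 1)]
    congr 1
    · rw [Fin.prod_univ_succ (n := m + 1)]
      simp
    · rw [Finset.mul_sum]
      refine Finset.sum_congr rfl fun j _ => ?_
      rw [Fin.prod_univ_succ (n := m + 1)]
      simp only [Fin.succ_lt_succ_iff, Fin.succ_pos, if_true]
      simp
      ring

/-- The matrix with `y i` above and `x i` below the diagonal. -/
def hollow {R : Type*} [CommRing R] {n : ℕ} (x y : Fin n → R) : Matrix (Fin n) (Fin n) R :=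
  Matrix.of fun i j => if i < j then y i else if j < i then x i else 0

lemma hollow_det {R : Type*} [CommRing R] {m : ℕ} (x y : Fin (m + 1) → R) :
    (hollow x y).det = (-1) ^ m * ∑ j ∈ Finset.Icc 1 m,
      ∏ i : Fin (m + 1), (if (i : ℕ) < j then y i else x i) := by
  have h : (hollow x y).det = (bidiag (fun i => if 0 < i then x i else 0) x y).det := by
    apply Matrix.det_eq_of_forall_col_eq_smul_add_pred (fun _ => 1)
    · intro i
      simp [bidiag_zero, hollow]
    · intro i j
      simp only [bidiag_succ, hollow, Matrix.of_apply, Fin.lt_def, Fin.ext_iff, Fin.val_succ,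
        Fin.val_castSucc]
      split_ifs <;> first | omega | simp
  rw [h, bidiag_det, Fin.sum_univ_succ]
  have hI : Finset.Icc 1 m = (Finset.range m).image Nat.succ := by
    ext a
    simp only [Finset.mem_Icc, Finset.mem_image, Finset.mem_range]
    constructor
    · intro h; exact ⟨a - 1, by omega, by omega⟩
    · rintro ⟨b, hb, rfl⟩; omega
  rw [hI, Finset.sum_image (fun a _ b _ h => Nat.succ_injective h), Finset.sum_range,
    Finset.mul_sum]
  simp only [lt_irrefl, if_false, zero_mul, zero_add, Fin.succ_pos, if_true]
  refine Finset.sum_congr rfl fun j _ => ?_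
  rw [← Finset.mul_prod_erase Finset.univ (fun i : Fin (m + 1) => if (i : ℕ) < _ then y i else x i)
      (Finset.mem_univ j.succ),
    ← Finset.mul_prod_erase Finset.univ (fun i : Fin (m + 1) =>
      if i < j.succ then - y i else if j.succ < i then - x i else 1) (Finset.mem_univ j.succ)]
  have : ∏ i ∈ Finset.univ.erase j.succ,
      (if i < j.succ then - y i else if j.succ < i then - x i else 1)
      = ∏ i ∈ Finset.univ.erase j.succ,
        (-1) * (if (i : ℕ) < Nat.succ j then y i else x i) := by
    refine Finset.prod_congr rfl fun i hi => ?_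
    have hi' : i.val ≠ j.val + 1 := by
      intro h; exact (Finset.ne_of_mem_erase hi) (Fin.ext h)
    simp only [Fin.lt_def, Fin.val_succ]
    split_ifs <;> first | omega | simp
  rw [this, Finset.prod_mul_distrib, Finset.prod_const, Finset.card_erase_of_mem (Finset.mem_univ _)]
  simp
  ring

lemma neg_one_pow_inversions {R : Type*} [CommRing R] {n : ℕ} (π : Equiv.Perm (Fin n)) :
    (-1 : R) ^ inversions π = ((Equiv.Perm.sign π : ℤ) : R) := by
  have : Equiv.Perm.sign π = (-1 : ℤˣ) ^ inversions π := by
    rw [Equiv.Perm.sign_eq_prod_prod_Ioi, Finset.prod_sigma', inversions, ← Finset.prod_const]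
    symm
    rw [Finset.prod_filter, ← Finset.univ_product_univ, Finset.prod_product, Finset.prod_sigma]
    refine Finset.prod_congr rfl fun i _ => ?_
    rw [← Finset.filter_lt_eq_Ioi, Finset.prod_filter]
    refine Finset.prod_congr rfl fun j _ => ?_
    by_cases hij : i < j
    · have : π i ≠ π j := fun h => hij.ne (π.injective h)
      rcases lt_or_gt_of_ne this with h | h
      · simp [hij, h, h.not_gt]
      · simp [hij, h, h.not_gt]
    · simp [hij]
  rw [this]; simp

/-- Positions `p < v` whose value is `≥ v`. -/
def upc {n : ℕ} (π : Equiv.Perm (Fin n)) (v : ℕ) : Finset (Fin n) :=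
  Finset.univ.filter fun p => p.val < v ∧ v ≤ (π p).val

lemma mem_upc {n : ℕ} {π : Equiv.Perm (Fin n)} {v : ℕ} {p : Fin n} :
    p ∈ upc π v ↔ p.val < v ∧ v ≤ (π p).val := by simp [upc]

lemma mem_EXCi {n : ℕ} {π : Equiv.Perm (Fin n)} {p : Fin n} :
    p ∈ EXCi π ↔ p < π p := by simp [EXCi]

lemma mem_RLMi {n : ℕ} {π : Equiv.Perm (Fin n)} {p : Fin n} :
    p ∈ RLMi π ↔ ∀ j, p < j → π p < π j := by simp [RLMi]

lemma mem_der {n : ℕ} {π : Equiv.Perm (Fin n)} :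
    π ∈ derangementsF n ↔ ∀ i, π i ≠ i := by simp [derangementsF]

open Classical in
/-- A transposition of two chosen elements of `M`. -/
noncomputable def chosenSwap {n : ℕ} (M : Finset (Fin n)) : Equiv.Perm (Fin n) :=
  if h : ∃ a ∈ M, ∃ b ∈ M, a ≠ b then
    Equiv.swap h.choose h.choose_spec.2.choose else 1

lemma chosenSwap_spec {n : ℕ} (M : Finset (Fin n)) (h : 1 < M.card) :
    ∃ a ∈ M, ∃ b ∈ M, a ≠ b ∧ chosenSwap M = Equiv.swap a b := by
  have h' := Finset.one_lt_card.1 h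
  unfold chosenSwap
  rw [dif_pos h']
  exact ⟨_, h'.choose_spec.1, _, h'.choose_spec.2.choose_spec.1,
    h'.choose_spec.2.choose_spec.2, rfl⟩

/-- The first level with two up-crossings. -/
noncomputable def lev {n : ℕ} (π : Equiv.Perm (Fin n)) : ℕ :=
  sInf {v | 1 < (upc π v).card}

/-- The involution. -/
noncomputable def invo {n : ℕ} (π : Equiv.Perm (Fin n)) : Equiv.Perm (Fin n) :=
  if 1 < (upc π (lev π)).card then π * chosenSwap (upc π (lev π)) else π

lemma upc_swap {n : ℕ} (π : Equiv.Perm (Fin n)) (v u : ℕ) (huv : u ≤ v) (a b : Fin n)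
    (ha : a ∈ upc π v) (hb : b ∈ upc π v) : upc (π * Equiv.swap a b) u = upc π u := by
  simp only [mem_upc] at ha hb
  ext p
  simp only [mem_upc, Equiv.Perm.mul_apply]
  by_cases hpa : p = a
  · subst hpa; rw [Equiv.swap_apply_left]; omega
  by_cases hpb : p = b
  · subst hpb; rw [Equiv.swap_apply_right]; omega
  rw [Equiv.swap_apply_of_ne_of_ne hpa hpb]

lemma lev_swap {n : ℕ} (π : Equiv.Perm (Fin n)) (hc : 1 < (upc π (lev π)).card) (a b : Fin n)
    (ha : a ∈ upc π (lev π)) (hb : b ∈ upc π (lev π)) :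
    lev (π * Equiv.swap a b) = lev π := by
  have h1 : lev (π * Equiv.swap a b) ≤ lev π := by
    apply Nat.sInf_le
    simp only [Set.mem_ofPred_eq]
    rw [upc_swap π _ _ le_rfl a b ha hb]
    exact hc
  apply le_antisymm h1
  have h2 : lev (π * Equiv.swap a b) ∈ {v | 1 < (upc (π * Equiv.swap a b) v).card} := by
    apply Nat.sInf_mem
    refine ⟨lev π, ?_⟩
    simp only [Set.mem_ofPred_eq]
    rw [upc_swap π _ _ le_rfl a b ha hb]
    exact hc
  simp only [Set.mem_ofPred_eq] at h2
  rw [upc_swap π _ _ h1 a b ha hb] at h2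
  exact Nat.sInf_le h2

lemma invo_invo {n : ℕ} (π : Equiv.Perm (Fin n)) : invo (invo π) = π := by
  by_cases hc : 1 < (upc π (lev π)).card
  · obtain ⟨a, ha, b, hb, hab, hs⟩ := chosenSwap_spec _ hc
    have h1 : invo π = π * Equiv.swap a b := by rw [invo, if_pos hc, hs]
    rw [h1, invo, lev_swap π hc a b ha hb, upc_swap π _ _ le_rfl a b ha hb, if_pos hc, hs,
      mul_assoc, Equiv.swap_mul_self, mul_one]
  · have h1 : invo π = π := by rw [invo, if_neg hc]
    rw [h1, h1]

lemma EXCi_swap {n : ℕ} (π : Equiv.Perm (Fin n)) (v : ℕ) (a b : Fin n)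
    (ha : a ∈ upc π v) (hb : b ∈ upc π v) : EXCi (π * Equiv.swap a b) = EXCi π := by
  simp only [mem_upc] at ha hb
  ext p
  simp only [mem_EXCi, Equiv.Perm.mul_apply, Fin.lt_def]
  by_cases hpa : p = a
  · subst hpa; rw [Equiv.swap_apply_left]; omega
  by_cases hpb : p = b
  · subst hpb; rw [Equiv.swap_apply_right]; omega
  rw [Equiv.swap_apply_of_ne_of_ne hpa hpb]

lemma der_swap {n : ℕ} (π : Equiv.Perm (Fin n)) (v : ℕ) (a b : Fin n)
    (ha : a ∈ upc π v) (hb : b ∈ upc π v) (hd : π ∈ derangementsF n) :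
    π * Equiv.swap a b ∈ derangementsF n := by
  simp only [mem_upc] at ha hb
  simp only [mem_der, Equiv.Perm.mul_apply,
    ne_eq, Fin.ext_iff] at hd ⊢
  intro p
  by_cases hpa : p = a
  · subst hpa; rw [Equiv.swap_apply_left]; omega
  by_cases hpb : p = b
  · subst hpb; rw [Equiv.swap_apply_right]; omega
  rw [Equiv.swap_apply_of_ne_of_ne hpa hpb]
  exact hd p

/-- A right-to-left minimum is not an excedance. -/
lemma RLM_le {n : ℕ} (π : Equiv.Perm (Fin n)) (i : Fin n) (hi : i ∈ RLMi π) : π i ≤ i := by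
  simp only [mem_RLMi] at hi
  have h : ((Finset.Ioi i).image π) ⊆ Finset.Ioi (π i) := by
    intro q hq
    obtain ⟨j, hj, rfl⟩ := Finset.mem_image.1 hq
    exact Finset.mem_Ioi.2 (hi j (Finset.mem_Ioi.1 hj))
  have h2 := Finset.card_le_card h
  rw [Finset.card_image_of_injective _ π.injective, Fin.card_Ioi, Fin.card_Ioi] at h2
  rw [Fin.le_def]
  omega

lemma RLMi_swap_sub {n : ℕ} (π : Equiv.Perm (Fin n)) (v : ℕ) (a b : Fin n)
    (ha : a ∈ upc π v) (hb : b ∈ upc π v) : RLMi π ⊆ RLMi (π * Equiv.swap a b) := by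
  intro i hi
  have hle := RLM_le π i hi
  simp only [mem_upc] at ha hb
  simp only [mem_RLMi, Equiv.Perm.mul_apply,
    Fin.lt_def, Fin.le_def] at hi hle ⊢
  have hia : i ≠ a := by rintro rfl; omega
  have hib : i ≠ b := by rintro rfl; omega
  rw [Equiv.swap_apply_of_ne_of_ne hia hib]
  intro j hj
  have hj' := hi j hj
  by_cases hpa : j = a
  · subst hpa; rw [Equiv.swap_apply_left]; omega
  by_cases hpb : j = b
  · subst hpb; rw [Equiv.swap_apply_right]; omega
  rw [Equiv.swap_apply_of_ne_of_ne hpa hpb]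
  exact hj'

lemma RLMi_swap {n : ℕ} (π : Equiv.Perm (Fin n)) (v : ℕ) (a b : Fin n)
    (ha : a ∈ upc π v) (hb : b ∈ upc π v) : RLMi (π * Equiv.swap a b) = RLMi π := by
  apply Finset.Subset.antisymm _ (RLMi_swap_sub π v a b ha hb)
  have hu := upc_swap π v v le_rfl a b ha hb
  have := RLMi_swap_sub (π * Equiv.swap a b) v a b (hu ▸ ha) (hu ▸ hb)
  rwa [mul_assoc, Equiv.swap_mul_self, mul_one] at this

/-- Up-crossings and down-crossings are equinumerous. -/
lemma upc_card {n : ℕ} (π : Equiv.Perm (Fin n)) (v : ℕ) :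
    (upc π v).card = (Finset.univ.filter fun p => v ≤ p.val ∧ (π p).val < v).card := by
  have h : (Finset.univ.filter fun p : Fin n => (π p).val < v).card
      = (Finset.univ.filter fun p : Fin n => p.val < v).card := by
    apply Finset.card_bij (fun p _ => π p)
    · intro p hp; simpa using hp
    · intro p _ q _ h; exact π.injective h
    · intro q hq; exact ⟨π.symm q, by simpa using hq, by simp⟩
  rw [← Finset.card_filter_add_card_filter_not (fun p => p.val < v),
    ← Finset.card_filter_add_card_filter_not
      (s := Finset.univ.filter fun p : Fin n => p.val < v) (fun p => (π p).val < v)] at h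
  simp only [Finset.filter_filter, not_lt] at h
  have e : (Finset.univ.filter fun p : Fin n => (π p).val < v ∧ p.val < v)
      = Finset.univ.filter fun p : Fin n => p.val < v ∧ (π p).val < v := by
    ext; simp [and_comm]
  have e2 : (Finset.univ.filter fun p : Fin n => v ≤ p.val ∧ (π p).val < v)
      = Finset.univ.filter fun p : Fin n => (π p).val < v ∧ v ≤ p.val := by
    ext; simp [and_comm]
  rw [e2, upc]
  rw [e] at h
  omega

lemma RLMi_eq {n : ℕ} (π : Equiv.Perm (Fin n)) (hd : π ∈ derangementsF n)
    (hc : ¬ 1 < (upc π (lev π)).card) : RLMi π = (EXCi π)ᶜ := by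
  ext i
  constructor
  · intro hi
    have := RLM_le π i hi
    simpa [EXCi] using this
  · intro hi
    by_contra hn
    apply hc
    simp only [mem_der] at hd
    simp only [mem_EXCi, Finset.mem_compl, not_lt] at hi
    have hi' : π i < i := lt_of_le_of_ne hi (hd i)
    simp only [mem_RLMi, not_forall, not_lt] at hn
    obtain ⟨j, hij, hj⟩ := hn
    have : (i : ℕ) ∈ {v | 1 < (upc π v).card} := by
      simp only [Set.mem_ofPred_eq]
      rw [upc_card, Finset.one_lt_card]
      refine ⟨i, ?_, j, ?_, hij.ne⟩
      · simpa using hi'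
      · simp only [Finset.mem_filter, Finset.mem_univ, true_and]
        simp only [Fin.lt_def, Fin.le_def] at *
        omega
    exact Nat.sInf_mem (s := {v | 1 < (upc π v).card}) ⟨_, this⟩

lemma sum_reduce {R : Type*} [CommRing R] {n : ℕ} (x y : Fin n → R) :
    ∑ π ∈ derangementsF n, ((Equiv.Perm.sign π : ℤ) : R) *
      ((∏ j ∈ RLMi π, x j) * (∏ j ∈ EXCi π, y j) - (∏ j ∈ (EXCi π)ᶜ, x j) * ∏ j ∈ EXCi π, y j)
    = 0 := by
  apply Finset.sum_involution (fun π _ => invo π)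
  · intro π hd
    by_cases hc : 1 < (upc π (lev π)).card
    · obtain ⟨a, ha, b, hb, hab, hs⟩ := chosenSwap_spec _ hc
      have h1 : invo π = π * Equiv.swap a b := by rw [invo, if_pos hc, hs]
      rw [h1, RLMi_swap π _ a b ha hb, EXCi_swap π _ a b ha hb, Equiv.Perm.sign_mul,
        Equiv.Perm.sign_swap hab]
      push_cast
      ring
    · have h1 : invo π = π := by rw [invo, if_neg hc]
      rw [h1, RLMi_eq π hd hc]
      simp
  · intro π hd hne
    by_cases hc : 1 < (upc π (lev π)).card
    · obtain ⟨a, ha, b, hb, hab, hs⟩ := chosenSwap_spec _ hc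
      have h1 : invo π = π * Equiv.swap a b := by rw [invo, if_pos hc, hs]
      rw [h1]
      intro h
      have h2 := congrArg (fun σ : Equiv.Perm (Fin n) => σ a) h
      simp only [Equiv.Perm.mul_apply, Equiv.swap_apply_left] at h2
      exact hab (π.injective h2).symm
    · rw [RLMi_eq π hd hc] at hne
      simp at hne
  · intro π hd
    by_cases hc : 1 < (upc π (lev π)).card
    · obtain ⟨a, ha, b, hb, hab, hs⟩ := chosenSwap_spec _ hc
      have h1 : invo π = π * Equiv.swap a b := by rw [invo, if_pos hc, hs]
      rw [h1]
      exact der_swap π _ a b ha hb hd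
    · have h1 : invo π = π := by rw [invo, if_neg hc]
      rw [h1]; exact hd
  · intro π hd
    exact invo_invo π

lemma sum_eq_det {R : Type*} [CommRing R] {n : ℕ} (x y : Fin n → R) :
    ∑ π ∈ derangementsF n, ((Equiv.Perm.sign π : ℤ) : R) *
      ((∏ j ∈ (EXCi π)ᶜ, x j) * ∏ j ∈ EXCi π, y j) = (hollow x y).det := by
  rw [← Matrix.det_transpose, Matrix.det_apply']
  rw [derangementsF, Finset.sum_filter]
  refine Finset.sum_congr rfl fun π _ => ?_
  by_cases hd : ∀ i, π i ≠ i
  · rw [if_pos hd]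
    congr 1
    rw [mul_comm, ← Finset.prod_mul_prod_compl (EXCi π) (fun i => (hollow x y).transpose (π i) i)]
    congr 1
    · refine Finset.prod_congr rfl fun i hi => ?_
      simp only [mem_EXCi] at hi
      simp [hollow, hi]
    · refine Finset.prod_congr rfl fun i hi => ?_
      simp only [mem_EXCi, Finset.mem_compl] at hi
      have : π i < i := lt_of_le_of_ne (not_lt.1 hi) (hd i)
      simp [hollow, hi, this]
  · rw [if_neg hd]
    push Not at hd
    obtain ⟨i, hi⟩ := hd
    rw [Finset.prod_eq_zero (Finset.mem_univ i), mul_zero]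
    simp [hollow, hi]

/-- Here `Fin n` represents `[n] = {1,…,n}` via `i ↦ i + 1`; the variable
`X (Sum.inl i)` is `x_{i+1}` and `X (Sum.inr i)` is `y_{i+1}`. -/
theorem stmt1 (n : ℕ) (hn : 1 ≤ n) :
    ∑ π ∈ derangementsF n,
      ((-1 : MvPolynomial (Fin n ⊕ Fin n) ℤ) ^ inversions π)
        * (∏ j ∈ RLMi π, X (Sum.inl j))
        * (∏ j ∈ EXCi π, X (Sum.inr j))
    = (-1) ^ (n - 1) *
        ∑ j ∈ Finset.Icc 1 (n - 1),
          ∏ i : Fin n,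
            (if (i : ℕ) < j then (X (Sum.inr i) : MvPolynomial (Fin n ⊕ Fin n) ℤ)
             else X (Sum.inl i)) := by
  obtain ⟨m, rfl⟩ : ∃ m, n = m + 1 := ⟨n - 1, by omega⟩
  have h1 := sum_reduce (fun i => (X (Sum.inl i) : MvPolynomial (Fin (m + 1) ⊕ Fin (m + 1)) ℤ))
    (fun i => X (Sum.inr i))
  have h2 := sum_eq_det (fun i => (X (Sum.inl i) : MvPolynomial (Fin (m + 1) ⊕ Fin (m + 1)) ℤ))
    (fun i => X (Sum.inr i))
  simp only [mul_sub, Finset.sum_sub_distrib] at h1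
  rw [h2, hollow_det, sub_eq_zero] at h1
  rw [Nat.add_sub_cancel, ← h1]
  refine Finset.sum_congr rfl fun π _ => ?_
  rw [neg_one_pow_inversions, mul_assoc]
end

section
/- For every integer n ≥ 1, ∑_{π ∈ D_n} (-1)^{inv(π)} t^{rlm(π)} = (-1)^{n-1}(t + t^2 + ⋯ + t^{n-1}) as an identity of polynomials in the variable t. -/
open Finset MvPolynomial

namespace St3
open Equiv Polynomial

def extL {n : ℕ} (τ : Perm (Fin n)) : Perm (Fin (n+1)) :=
  finSuccEquivLast.symm.permCongr (optionCongr τ)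

@[simp] lemma extL_castSucc {n : ℕ} (τ : Perm (Fin n)) (i : Fin n) :
    extL τ i.castSucc = (τ i).castSucc := by
  simp [extL, Equiv.permCongr_apply]

@[simp] lemma extL_last {n : ℕ} (τ : Perm (Fin n)) :
    extL τ (Fin.last n) = Fin.last n := by
  simp [extL, Equiv.permCongr_apply]

@[simp] lemma extL_sign {n : ℕ} (τ : Perm (Fin n)) :
    Perm.sign (extL τ) = Perm.sign τ := by
  simp [extL, Equiv.optionCongr_sign]

lemma extL_inj {n : ℕ} {τ σ : Perm (Fin n)} (h : extL τ = extL σ) : τ = σ := by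
  ext i
  have := congrArg (fun f : Perm (Fin (n+1)) => f i.castSucc) h
  simpa using congrArg Fin.val this

lemma extL_surj {n : ℕ} (π : Perm (Fin (n+1))) (h : π (Fin.last n) = Fin.last n) :
    ∃ τ, extL τ = π := by
  have hs : ∀ i : Fin n, π i.castSucc ≠ Fin.last n := by
    intro i hi
    have := π.injective (hi.trans h.symm)
    exact (Fin.castSucc_lt_last i).ne this
  let f : Fin n → Fin n := fun i => (π i.castSucc).castPred (hs i)
  have hf : Function.Injective f := by
    intro a b hab
    simpa [f] using hab
  refine ⟨Equiv.ofBijective f (Finite.injective_iff_bijective.mp hf), ?_⟩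
  ext x
  refine Fin.lastCases ?_ (fun i => ?_) x
  · rw [extL_last, h]
  · rw [extL_castSucc]; simp [f]

lemma sign_eq {n : ℕ} (π : Perm (Fin n)) :
    ((-1 : Polynomial ℤ) ^ inversions π) = (((Perm.sign π : ℤˣ) : ℤ) : Polynomial ℤ) := by
  rw [Equiv.Perm.sign_eq_prod_prod_Ioi]
  have h1 : inversions π = ∑ i, ((Ioi i).filter (fun j => π j < π i)).card := by
    unfold inversions
    rw [Finset.card_filter, Fintype.sum_prod_type]
    refine Finset.sum_congr rfl fun i _ => ?_
    rw [← Finset.card_filter]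
    congr 1; ext j; simp
  rw [h1, ← Finset.prod_pow_eq_pow_sum]
  push_cast
  refine Finset.prod_congr rfl fun i _ => ?_
  rw [← Finset.prod_const, Finset.prod_filter]
  refine Finset.prod_congr rfl fun j hj => ?_
  have : π i ≠ π j := fun h => by simp at hj; exact hj.ne (π.injective h)
  by_cases h : π i < π j
  · simp [h, h.not_gt]
  · have h' : π j < π i := lt_of_le_of_ne (not_lt.mp h) this.symm
    simp [h, h']

noncomputable def w {n : ℕ} (π : Perm (Fin n)) : Polynomial ℤ :=
  (((Perm.sign π : ℤˣ) : ℤ) : Polynomial ℤ) * Polynomial.X ^ (RLMi π).card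

noncomputable def D (n : ℕ) : Polynomial ℤ := ∑ π ∈ derangementsF n, w π

noncomputable def R (n : ℕ) (m : Fin (n+1)) : Polynomial ℤ :=
  ∑ π ∈ (derangementsF (n+1)).filter (fun π => π (Fin.last n) = m), w π

lemma D_eq (n : ℕ) : D (n+1) = ∑ m : Fin n, R n m.castSucc := by
  have h0 : R n (Fin.last n) = 0 := by
    unfold R
    rw [Finset.filter_false_of_mem, Finset.sum_empty]
    intro π hπ
    simp only [derangementsF, mem_filter, mem_univ, true_and] at hπ
    exact hπ _
  have : D (n+1) = ∑ m : Fin (n+1), R n m := by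
    unfold D R
    rw [Finset.sum_fiberwise]
  rw [this, Fin.sum_univ_castSucc, h0, add_zero]

lemma rlm_sum {n : ℕ} (π : Perm (Fin n)) :
    (RLMi π).card = ∑ i, if ∀ j, i < j → π i < π j then 1 else 0 := by
  rw [RLMi, Finset.card_filter]

lemma last_rlm {n : ℕ} (π : Perm (Fin (n+1))) :
    ∀ j, Fin.last n < j → π (Fin.last n) < π j :=
  fun j hj => absurd (Fin.le_last j) hj.not_ge

abbrev pl (n : ℕ) : Fin (n+2) := (Fin.last n).castSucc
abbrev sw (n : ℕ) : Perm (Fin (n+2)) := swap (pl n) (Fin.last (n+1))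

lemma pl_ne (n : ℕ) : pl n ≠ Fin.last (n+1) := (Fin.castSucc_lt_last _).ne

lemma cc_ne_pl {n : ℕ} (i : Fin n) : i.castSucc.castSucc ≠ pl n := by
  simp [pl, Fin.ext_iff]; omega
lemma cc_ne_last {n : ℕ} (i : Fin n) : i.castSucc.castSucc ≠ Fin.last (n+1) := by
  simp [Fin.ext_iff]; omega

@[simp] lemma sw_cc {n : ℕ} (i : Fin n) : sw n i.castSucc.castSucc = i.castSucc.castSucc :=
  swap_apply_of_ne_of_ne (cc_ne_pl i) (cc_ne_last i)

lemma sw_sign (n : ℕ) : Perm.sign (sw n) = -1 := Perm.sign_swap (pl_ne n)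

/-- adjacent last values do not matter -/
lemma all3 {n : ℕ} {p : Fin (n+2) → Prop} :
    (∀ i, p i) ↔ (∀ i : Fin n, p i.castSucc.castSucc) ∧ p (pl n) ∧ p (Fin.last (n+1)) := by
  rw [Fin.forall_fin_succ', Fin.forall_fin_succ', and_assoc]

lemma wA {n : ℕ} (τ : Perm (Fin (n+1))) :
    w (extL τ * sw n) = - w τ := by
  have : (RLMi (extL τ * sw n)).card = (RLMi τ).card := by
    rw [rlm_sum, rlm_sum]
    rw [Fin.sum_univ_castSucc, Fin.sum_univ_castSucc, Fin.sum_univ_castSucc]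
    congr 1
    · have : ¬ (∀ j, (Fin.last n).castSucc < j →
          (extL τ * sw n) (Fin.last n).castSucc < (extL τ * sw n) j) := by
        intro h
        have := h (Fin.last (n+1)) (Fin.castSucc_lt_last _)
        simp [sw, pl] at this
        exact absurd this (Fin.le_last _).not_gt
      rw [if_neg this, add_zero]
      refine Finset.sum_congr rfl fun i _ => ?_
      congr 1
      rw [all3, Fin.forall_fin_succ']
      simp [sw_cc, sw, pl, Fin.castSucc_lt_last]
    · rw [if_pos (last_rlm _), if_pos (last_rlm _)]
  unfold w
  rw [this, Perm.sign_mul, sw_sign, extL_sign]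
  push_cast; ring

lemma wE {n : ℕ} (τ : Perm (Fin n)) : w (extL τ) = Polynomial.X * w τ := by
  have : (RLMi (extL τ)).card = (RLMi τ).card + 1 := by
    rw [rlm_sum, rlm_sum, Fin.sum_univ_castSucc]
    congr 1
    · refine Finset.sum_congr rfl fun i _ => ?_
      congr 1
      rw [Fin.forall_fin_succ']
      simp [Fin.castSucc_lt_last]
    · rw [if_pos (last_rlm _)]
  unfold w
  rw [this, extL_sign, pow_succ]
  ring

lemma sw_small {n : ℕ} {a : Fin (n+2)} (h : a < pl n) : sw n a = a :=
  swap_apply_of_ne_of_ne h.ne (h.trans (Fin.castSucc_lt_last _)).ne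

lemma sw_big {n : ℕ} {a : Fin (n+2)} (h : pl n ≤ a) : pl n ≤ sw n a := by
  unfold sw
  rw [swap_apply_def]
  split_ifs
  · exact Fin.le_last _
  · exact le_rfl
  · exact h

lemma lt_sw {n : ℕ} {a b : Fin (n+2)} (h : a < pl n) : a < sw n b ↔ a < b := by
  rcases lt_or_ge b (pl n) with hb | hb
  · rw [sw_small hb]
  · exact ⟨fun _ => h.trans_le hb, fun _ => h.trans_le (sw_big hb)⟩

lemma wS {n : ℕ} (π : Perm (Fin (n+2))) (h : π (Fin.last (n+1)) < pl n) :
    w (sw n * π) = - w π := by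
  have : RLMi (sw n * π) = RLMi π := by
    ext i
    rw [RLMi, RLMi, Finset.mem_filter_univ, Finset.mem_filter_univ]
    simp only [Perm.mul_apply]
    rcases lt_or_ge (π i) (pl n) with hi | hi
    · rw [sw_small hi]
      simp only [lt_sw hi]
    · have hil : i < Fin.last (n+1) := by
        refine lt_of_le_of_ne (Fin.le_last _) ?_
        rintro rfl
        exact h.not_ge hi
      constructor
      · intro h'
        have h2 := h' _ hil
        rw [sw_small h] at h2
        exact absurd (h2.trans h) (sw_big hi).not_gt
      · intro h'
        exact absurd ((h' _ hil).trans h) hi.not_gt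
  unfold w
  rw [this, Perm.sign_mul, sw_sign]
  push_cast; ring

lemma wB {n : ℕ} (τ : Perm (Fin (n+1))) (h : τ (Fin.last n) ≠ Fin.last n) :
    w (sw n * extL τ) = - (Polynomial.X * w τ) := by
  have hl : τ (Fin.last n) < Fin.last n := Fin.lt_last_iff_ne_last.mpr h
  have hl' : (τ (Fin.last n)).castSucc < pl n := by simpa [pl] using hl
  have hlast : sw n (Fin.last (n+1)) = pl n := swap_apply_right _ _
  have : (RLMi (sw n * extL τ)).card = (RLMi τ).card + 1 := by
    rw [rlm_sum, rlm_sum]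
    rw [Fin.sum_univ_castSucc]
    congr 1
    · refine Finset.sum_congr rfl fun i _ => ?_
      congr 1
      rw [Fin.forall_fin_succ' (n := n+1)]
      simp only [Perm.mul_apply, extL_castSucc, extL_last, hlast, Fin.castSucc_lt_castSucc_iff,
        Fin.castSucc_lt_last, forall_const, eq_iff_iff]
      rcases lt_or_ge (τ i) (Fin.last n) with hi | hi
      · have hi' : (τ i).castSucc < pl n := by simpa [pl] using hi
        rw [sw_small hi']
        simp only [lt_sw hi', Fin.castSucc_lt_castSucc_iff, hi', and_true]
      · have hil : i < Fin.last n := by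
          refine lt_of_le_of_ne (Fin.le_last _) ?_
          rintro rfl
          exact hl.not_ge hi
        have hi' : pl n ≤ (τ i).castSucc := by simpa [pl] using hi
        constructor
        · intro h'
          exact absurd h'.2 (sw_big hi').not_gt
        · intro h'
          exact absurd ((h' _ hil).trans hl) hi.not_gt
    · rw [if_pos (last_rlm _)]
  unfold w
  rw [this, Perm.sign_mul, sw_sign, extL_sign, pow_succ]
  push_cast; ring

lemma mem_D {n : ℕ} (π : Perm (Fin n)) : π ∈ derangementsF n ↔ ∀ i, π i ≠ i := by
  simp [derangementsF]

lemma sw_sw {n : ℕ} (a : Fin (n+2)) : sw n (sw n a) = a := swap_apply_self _ _ _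
lemma sw_pl (n : ℕ) : sw n (pl n) = Fin.last (n+1) := swap_apply_left _ _
lemma sw_last (n : ℕ) : sw n (Fin.last (n+1)) = pl n := swap_apply_right _ _
lemma sw_mul (n : ℕ) : sw n * sw n = 1 := swap_mul_self _ _

lemma cc_lt_pl {n : ℕ} (i : Fin n) : i.castSucc.castSucc < pl n := by
  simp [pl, Fin.lt_def]

lemma lt_pl_of {n : ℕ} {a : Fin (n+2)} (h : a ≠ pl n) (h' : a ≠ Fin.last (n+1)) : a < pl n := by
  simp [pl, Fin.lt_def, Fin.ext_iff] at *
  omega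

lemma R_split (n : ℕ) (m : Fin (n+2)) : R (n+1) m =
    ∑ π ∈ (derangementsF (n+2)).filter
      (fun π => π (Fin.last (n+1)) = m ∧ π (pl n) = Fin.last (n+1)), w π +
    ∑ π ∈ (derangementsF (n+2)).filter
      (fun π => π (Fin.last (n+1)) = m ∧ π (pl n) ≠ Fin.last (n+1)), w π := by
  unfold R
  rw [← Finset.sum_filter_add_sum_filter_not _ (fun π => π (pl n) = Fin.last (n+1)),
    Finset.filter_filter, Finset.filter_filter]

lemma R_small (n : ℕ) (m : Fin n) : R (n+1) m.castSucc.castSucc = - R n m.castSucc := by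
  rw [R_split]
  have h2 : ∑ π ∈ (derangementsF (n+2)).filter
      (fun π => π (Fin.last (n+1)) = m.castSucc.castSucc ∧ π (pl n) ≠ Fin.last (n+1)), w π = 0 := by
    refine Finset.sum_involution (fun π _ => sw n * π) ?_ ?_ ?_ ?_
    · intro π hπ
      simp only [mem_filter] at hπ
      rw [wS _ (by rw [hπ.2.1]; exact cc_lt_pl m)]
      ring
    · intro π hπ _ h
      have h3 : sw n = 1 := by simpa only [mul_eq_right] using h
      have h4 := sw_pl n
      rw [h3] at h4
      exact pl_ne n h4
    · intro π hπ
      simp only [mem_filter, mem_D, Perm.mul_apply] at hπ ⊢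
      obtain ⟨hd, hl, hp⟩ := hπ
      have hp' := lt_pl_of (hd _) hp
      refine ⟨?_, by rw [hl, sw_cc], by rw [sw_small hp']; exact hp⟩
      rw [all3]
      refine ⟨fun i h => ?_, by rw [sw_small hp']; exact hd _, ?_⟩
      · have := congrArg (sw n) h
        rw [sw_sw, sw_cc] at this
        exact hd _ this
      · rw [hl, sw_cc]; exact cc_ne_last m
    · intro π hπ
      rw [← mul_assoc, sw_mul, one_mul]
  rw [h2, add_zero, R, ← Finset.sum_neg_distrib]
  symm
  refine Finset.sum_bij (fun τ _ => extL τ * sw n) ?_ ?_ ?_ ?_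
  · intro τ hτ
    simp only [mem_filter, mem_D] at hτ ⊢
    obtain ⟨hd, hl⟩ := hτ
    simp only [Perm.mul_apply, sw_last, sw_pl, extL_last, pl, extL_castSucc, hl, and_true]
    rw [all3]
    refine ⟨fun i => ?_, ?_, ?_⟩
    · rw [sw_cc, extL_castSucc]
      simpa using hd i.castSucc
    · rw [sw_pl, extL_last]; exact (pl_ne n).symm
    · rw [sw_last, extL_castSucc]; exact (Fin.castSucc_lt_last _).ne
  · intro a _ b _ h
    exact extL_inj (mul_right_cancel h)
  · intro π hπ
    simp only [mem_filter, mem_D] at hπ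
    obtain ⟨hd, hl, hp⟩ := hπ
    obtain ⟨τ, hτ⟩ := extL_surj (π * sw n) (by rw [Perm.mul_apply, sw_last, hp])
    have hπ' : extL τ * sw n = π := by rw [hτ, mul_assoc, sw_mul, mul_one]
    refine ⟨τ, ?_, hπ'⟩
    have h1 : τ (Fin.last n) = m.castSucc := by
      rw [← hπ', Perm.mul_apply, sw_last, extL_castSucc] at hl
      exact Fin.castSucc_injective _ hl
    simp only [mem_filter, mem_D]
    refine ⟨?_, h1⟩
    rw [Fin.forall_fin_succ']
    refine ⟨fun i hi => ?_, ?_⟩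
    · apply hd i.castSucc.castSucc
      rw [← hπ', Perm.mul_apply, sw_cc, extL_castSucc, hi]
    · rw [h1]; exact (Fin.castSucc_lt_last _).ne
  · intro τ _
    rw [wA]

lemma R_big (n : ℕ) : R (n+1) (pl n) = - (Polynomial.X * (D n + D (n+1))) := by
  rw [R_split, mul_add, neg_add]
  congr 1
  · rw [D, Finset.mul_sum, ← Finset.sum_neg_distrib]
    symm
    refine Finset.sum_bij (fun τ _ => extL (extL τ) * sw n) ?_ ?_ ?_ ?_
    · intro τ hd
      simp only [mem_filter, mem_D] at hd ⊢
      simp only [Perm.mul_apply, sw_last, sw_pl, extL_last, pl, extL_castSucc, and_true]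
      rw [all3]
      refine ⟨fun i => ?_, ?_, ?_⟩
      · rw [sw_cc, extL_castSucc, extL_castSucc]
        simpa using hd i
      · rw [sw_pl, extL_last]; exact (pl_ne n).symm
      · rw [sw_last, extL_castSucc]; exact (Fin.castSucc_lt_last _).ne
    · intro a _ b _ h
      exact extL_inj (extL_inj (mul_right_cancel h))
    · intro π hπ
      simp only [mem_filter, mem_D] at hπ
      obtain ⟨hd, hl, hp⟩ := hπ
      obtain ⟨τ, hτ⟩ := extL_surj (π * sw n) (by rw [Perm.mul_apply, sw_last, hp])
      have hπ' : extL τ * sw n = π := by rw [hτ, mul_assoc, sw_mul, mul_one]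
      have h1 : τ (Fin.last n) = Fin.last n := by
        rw [← hπ', Perm.mul_apply, sw_last, extL_castSucc] at hl
        exact Fin.castSucc_injective _ hl
      obtain ⟨τ, rfl⟩ := extL_surj τ h1
      refine ⟨τ, ?_, hπ'⟩
      rw [mem_D]
      intro i hi
      apply hd i.castSucc.castSucc
      rw [← hπ', Perm.mul_apply, sw_cc, extL_castSucc, extL_castSucc, hi]
    · intro τ _
      rw [wA, wE]
  · rw [D, Finset.mul_sum, ← Finset.sum_neg_distrib]
    symm
    refine Finset.sum_bij (fun τ _ => sw n * extL τ) ?_ ?_ ?_ ?_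
    · intro τ hd
      simp only [mem_filter, mem_D] at hd ⊢
      have hl : (τ (Fin.last n)).castSucc < pl n := by
        simpa [pl] using Fin.lt_last_iff_ne_last.mpr (hd (Fin.last n))
      have e1 : (sw n * extL τ) (pl n) = (τ (Fin.last n)).castSucc := by
        rw [Perm.mul_apply, extL_castSucc, sw_small hl]
      have e2 : (sw n * extL τ) (Fin.last (n+1)) = pl n := by
        rw [Perm.mul_apply, extL_last, sw_last]
      rw [e1, e2]
      refine ⟨?_, rfl, (Fin.castSucc_lt_last _).ne⟩
      rw [all3, e1, e2]
      refine ⟨fun i h => ?_, hl.ne, pl_ne n⟩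
      have := congrArg (sw n) h
      rw [Perm.mul_apply, sw_sw, sw_cc, extL_castSucc] at this
      exact hd _ (Fin.castSucc_injective _ this)
    · intro a _ b _ h
      exact extL_inj (mul_left_cancel h)
    · intro π hπ
      simp only [mem_filter, mem_D] at hπ
      obtain ⟨hd, hl, hp⟩ := hπ
      obtain ⟨τ, hτ⟩ := extL_surj (sw n * π) (by rw [Perm.mul_apply, hl, sw_pl])
      have hπ' : sw n * extL τ = π := by rw [hτ, ← mul_assoc, sw_mul, one_mul]
      refine ⟨τ, ?_, hπ'⟩
      rw [mem_D, Fin.forall_fin_succ']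
      refine ⟨fun i hi => ?_, fun h => ?_⟩
      · apply hd i.castSucc.castSucc
        rw [← hπ', Perm.mul_apply, extL_castSucc, hi, sw_cc]
      · apply hp
        rw [← hπ', Perm.mul_apply, extL_castSucc, h, sw_pl]
    · intro τ hτ
      rw [mem_D] at hτ
      rw [wB _ (hτ _)]

lemma D_of_R (n : ℕ) (h : ∀ m : Fin n, R n m.castSucc = (-1)^n * Polynomial.X^((m:ℕ)+1)) :
    D (n+1) = (-1)^n * ∑ k ∈ range n, (Polynomial.X : Polynomial ℤ)^(k+1) := by
  rw [D_eq, Finset.mul_sum, ← Fin.sum_univ_eq_sum_range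
    (fun k => (-1)^n * (Polynomial.X : Polynomial ℤ)^(k+1))]
  exact Finset.sum_congr rfl fun m _ => h m

lemma D_zero : D 0 = 1 := by
  have : derangementsF 0 = {1} := by
    ext π; rw [mem_D, Finset.mem_singleton]
    exact ⟨fun _ => Subsingleton.elim _ _, fun _ i => i.elim0⟩
  rw [D, this, Finset.sum_singleton, w]
  simp [RLMi]

lemma R_eq (n : ℕ) : ∀ m : Fin n, R n m.castSucc = (-1)^n * Polynomial.X^((m:ℕ)+1) := by
  induction n using Nat.strong_induction_on with
  | _ n ih =>
    match n, ih with
    | 0, _ => exact fun m => m.elim0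
    | n+1, ih =>
      intro m
      refine Fin.lastCases ?_ (fun i => ?_) m
      · have := R_big n
        rw [pl] at this
        rw [this, D_of_R n (ih n (by omega))]
        match n, ih with
        | 0, _ => simp [D_zero]
        | n+1, ih =>
          rw [D_of_R n (ih n (by omega)), Finset.sum_range_succ]
          simp only [Fin.val_last]
          ring
      · rw [R_small, ih n (by omega)]
        simp only [Fin.val_castSucc]
        ring

end St3

theorem stmt3 (n : ℕ) (hn : 1 ≤ n) :
    ∑ π ∈ derangementsF n,
      ((-1 : Polynomial ℤ) ^ inversions π) * Polynomial.X ^ (RLMi π).card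
    = (-1) ^ (n - 1) * ∑ k ∈ Finset.Icc 1 (n - 1), (Polynomial.X : Polynomial ℤ) ^ k := by
  obtain ⟨n, rfl⟩ : ∃ k, n = k + 1 := ⟨n - 1, by omega⟩
  have h := St3.D_of_R n (St3.R_eq n)
  rw [Nat.add_sub_cancel]
  calc _ = St3.D (n+1) := Finset.sum_congr rfl fun π _ => by rw [St3.sign_eq, St3.w]
    _ = _ := by
      rw [h]
      congr 1
      rw [← Finset.Ico_add_one_right_eq_Icc, Finset.sum_Ico_eq_sum_range]
      refine Finset.sum_congr (by simp) fun k _ => by rw [add_comm]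
end

section
/- For every n ≥ 1 and every k with 1 ≤ k ≤ n-1, the number of even derangements of [n] with exactly k excedances minus the number of odd derangements of [n] with exactly k excedances equals (-1)^{n-1}. -/
open Finset MvPolynomial

/-- The matrix whose determinant enumerates signed derangements by excedances. -/
noncomputable def excMat (n : ℕ) : Matrix (Fin n) (Fin n) (Polynomial ℤ) :=
  Matrix.of fun a b => if b < a then Polynomial.X else if a = b then 0 else 1

theorem sign_eq_inversions {n : ℕ} (π : Equiv.Perm (Fin n)) :
    (Equiv.Perm.sign π : ℤ) = (-1) ^ inversions π := by
  rw [Equiv.Perm.sign_eq_prod_prod_Ioi, inversions, Finset.prod_sigma']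
  rw [Finset.prod_ite]
  simp only [prod_const_one, one_mul, prod_const, Units.val_pow_eq_pow_val, Units.val_neg,
    Units.val_one]
  congr 1
  refine Finset.card_bij (fun x _ => (x.1, x.2)) ?_ ?_ ?_
  · rintro ⟨a, b⟩ h
    simp only [mem_filter, mem_sigma, mem_univ, true_and, mem_Ioi, not_lt] at h ⊢
    refine ⟨h.1, lt_of_le_of_ne h.2 ?_⟩
    intro e
    exact absurd (π.injective e) h.1.ne'
  · rintro ⟨a, b⟩ _ ⟨c, d⟩ _ h
    simp only [Prod.mk.injEq] at h
    obtain ⟨rfl, rfl⟩ := h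
    rfl
  · rintro ⟨a, b⟩ h
    simp only [mem_filter, mem_univ, true_and] at h
    exact ⟨⟨a, b⟩, by simp [h.1, h.2.le], rfl⟩

theorem det_excMat_affine (n : ℕ) : ∃ B : Polynomial ℤ, ∀ z : Polynomial ℤ,
    (excMat n - Matrix.of fun _ _ => z).det = (-1) ^ n + (1 - z) * B := by
  set U : Matrix (Fin n) (Fin n) (Polynomial ℤ) := excMat n - Matrix.of fun _ _ => 1 with hU
  have hdet : U.det = (-1) ^ n := by
    rw [Matrix.det_of_isLowerTriangular]
    · simp [hU, excMat]
    · intro i j hij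
      have hij' : i < j := hij
      simp [hU, excMat, hij'.not_gt, hij'.ne]
  have hu : IsUnit U.det := by
    rw [hdet]; exact (isUnit_one.neg).pow n
  let u : Fin n → Polynomial ℤ := fun _ => 1
  let R : Matrix Unit (Fin n) (Polynomial ℤ) := Matrix.replicateRow Unit u
  let C : Matrix (Fin n) Unit (Polynomial ℤ) := Matrix.replicateCol Unit u
  let Q : Matrix Unit Unit (Polynomial ℤ) := R * U⁻¹ * C
  refine ⟨(-1) ^ n * Q default default, fun z => ?_⟩
  let w : Fin n → Polynomial ℤ := fun _ => 1 - z
  let D : Matrix (Fin n) Unit (Polynomial ℤ) := Matrix.replicateCol Unit w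
  have key : (U + D * R).det = U.det * (1 + R * U⁻¹ * D).det :=
    Matrix.det_add_replicateCol_mul_replicateRow (ι := Unit) hu w u
  have e1 : U + D * R = excMat n - Matrix.of fun _ _ => z := by
    ext1 i j
    simp [hU, Matrix.mul_apply, D, R, u, w]
  have e2 : D = (1 - z) • C := by
    ext1 i j
    simp [D, C, u, w]
  rw [e1, hdet, e2, Matrix.mul_smul, Matrix.det_unique (n := Unit)] at key
  rw [key, Matrix.add_apply, Matrix.smul_apply, Matrix.one_apply_eq, smul_eq_mul]
  change _ = (-1) ^ n + (1 - z) * ((-1) ^ n * (R * U⁻¹ * C) default default)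
  ring

theorem det_excMat (n : ℕ) :
    (excMat (n + 1)).det = (-1) ^ n * ∑ i ∈ Finset.range n, Polynomial.X ^ (i + 1) := by
  obtain ⟨B, hB⟩ := det_excMat_affine (n + 1)
  have h0 := hB 0
  have hX := hB Polynomial.X
  have e0 : (excMat (n + 1) - Matrix.of fun _ _ => (0 : Polynomial ℤ)) = excMat (n + 1) := by
    ext1 i j
    simp
  rw [e0] at h0
  rw [Matrix.det_of_isUpperTriangular] at hX
  · have hX' : (-Polynomial.X : Polynomial ℤ) ^ (n + 1) =
        (-1) ^ (n + 1) + (1 - Polynomial.X) * B := by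
      rw [← hX]; simp [excMat]
    rw [neg_pow] at hX'
    have g := mul_geom_sum (Polynomial.X : Polynomial ℤ) n
    have hne : (Polynomial.X - 1 : Polynomial ℤ) ≠ 0 := Polynomial.X_sub_C_ne_zero (1 : ℤ)
    apply mul_left_cancel₀ hne
    have e : ∑ i ∈ Finset.range n, (Polynomial.X : Polynomial ℤ) ^ (i + 1) =
        Polynomial.X * ∑ i ∈ Finset.range n, Polynomial.X ^ i := by
      rw [Finset.mul_sum]
      exact Finset.sum_congr rfl fun i _ => pow_succ' _ _
    rw [e, h0]
    linear_combination hX' - (-1) ^ n * Polynomial.X * g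
  · intro i j hij
    have hij' : j < i := hij
    simp [excMat, hij']

theorem prod_excMat {n : ℕ} (π : Equiv.Perm (Fin n)) :
    ∏ i, excMat n (π i) i =
      if ∀ i, π i ≠ i then Polynomial.X ^ (EXCi π).card else 0 := by
  split_ifs with h
  · rw [EXCi, ← Finset.prod_const, Finset.prod_filter]
    refine Finset.prod_congr rfl fun i _ => ?_
    simp [excMat, h i]
  · push Not at h
    obtain ⟨i, hi⟩ := h
    refine Finset.prod_eq_zero (Finset.mem_univ i) ?_
    simp [excMat, hi]

theorem stmt4 (n k : ℕ) (hn : 1 ≤ n) (hk1 : 1 ≤ k) (hk2 : k ≤ n - 1) :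
    (((derangementsF n).filter fun π => Even (inversions π) ∧ (EXCi π).card = k).card : ℤ)
      - ((derangementsF n).filter fun π => ¬ Even (inversions π) ∧ (EXCi π).card = k).card
    = (-1) ^ (n - 1) := by
  obtain ⟨m, rfl⟩ : ∃ m, n = m + 1 := ⟨n - 1, by omega⟩
  have hc := congrArg (fun p => Polynomial.coeff p k) (det_excMat m)
  have hr : ((-1 : Polynomial ℤ) ^ m * ∑ i ∈ Finset.range m, Polynomial.X ^ (i + 1)).coeff k
      = (-1) ^ m := by
    have e : (-1 : Polynomial ℤ) ^ m = Polynomial.C ((-1) ^ m) := by simp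
    rw [e, Polynomial.coeff_C_mul, Polynomial.finsetSum_coeff,
      Finset.sum_eq_single_of_mem (k - 1) (Finset.mem_range.2 (by omega))]
    · rw [Polynomial.coeff_X_pow, if_pos (by omega), mul_one]
    · intro b _ hb
      rw [Polynomial.coeff_X_pow, if_neg (by omega)]
  simp only [hr] at hc
  rw [Nat.add_sub_cancel, ← hc, Matrix.det_apply', Polynomial.finsetSum_coeff]
  rw [Finset.card_filter, Finset.card_filter]
  push_cast
  rw [← Finset.sum_sub_distrib, derangementsF, Finset.sum_filter]
  refine Finset.sum_congr rfl fun π _ => ?_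
  rw [prod_excMat, Polynomial.coeff_intCast_mul, sign_eq_inversions]
  by_cases h : ∀ i, π i ≠ i
  · rw [if_pos h, if_pos h, Polynomial.coeff_X_pow]
    by_cases h1 : Even (inversions π)
    · simp [h1, h1.neg_one_pow, eq_comm]
    · have h2 := (Nat.not_even_iff_odd.1 h1).neg_one_pow (α := ℤ)
      by_cases h3 : (EXCi π).card = k
      · simp [h1, h2, h3]
      · simp [h1, h2, h3, Ne.symm h3]
  · rw [if_neg h, if_neg h]; simp
end

section
/- For every integer n ≥ 1, the number of even derangements of [n] minus the number of odd derangements of [n] equals (-1)^{n-1}(n-1). -/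
open Finset MvPolynomial

open Equiv in
lemma sign_inversions {n : ℕ} (π : Equiv.Perm (Fin n)) :
    ((Equiv.Perm.sign π : ℤˣ) : ℤ) = (-1) ^ inversions π := by
  rw [Equiv.Perm.sign_eq_prod_prod_Ioi]
  have h : ∀ i : Fin n, Finset.Ioi i = Finset.univ.filter (fun j => i < j) := by
    intro i; ext; simp
  push_cast
  simp only [h, Finset.prod_filter]
  rw [← Fintype.prod_prod_type'
    (f := fun i j : Fin n => if i < j then (((if π i < π j then 1 else -1 : ℤˣ)) : ℤ) else 1)]
  rw [inversions, ← Finset.prod_const, Finset.prod_filter]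
  refine Finset.prod_congr rfl ?_
  rintro ⟨i, j⟩ -
  by_cases hij : i < j
  · rcases lt_trichotomy (π i) (π j) with h1 | h1 | h1
    · simp [hij, h1, h1.le, not_lt.mpr h1.le]
    · exact absurd (π.injective h1) hij.ne
    · simp [hij, h1, not_lt.mpr h1.le]
  · simp [hij]

lemma det_J (n : ℕ) : (Matrix.of fun i j : Fin n => if i = j then (0:ℤ) else 1).det
    = (-1) ^ n * (1 - n) := by
  have h : (Matrix.of fun i j : Fin n => if i = j then (0:ℤ) else 1) =
      -(1 + Matrix.replicateCol Unit (fun _ : Fin n => (-1:ℤ)) * Matrix.replicateRow Unit (fun _ : Fin n => (1:ℤ))) := by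
    ext i j
    by_cases hij : i = j <;> simp [hij, Matrix.mul_apply, Matrix.one_apply]
  rw [h, Matrix.det_neg, Matrix.det_one_add_replicateCol_mul_replicateRow]
  simp [dotProduct, sub_eq_add_neg]

theorem stmt5 (n : ℕ) (hn : 1 ≤ n) :
    (((derangementsF n).filter fun π => Even (inversions π)).card : ℤ)
      - ((derangementsF n).filter fun π => ¬ Even (inversions π)).card
    = (-1) ^ (n - 1) * ((n : ℤ) - 1) := by
  have h1 : (((derangementsF n).filter fun π => Even (inversions π)).card : ℤ)
      - ((derangementsF n).filter fun π => ¬ Even (inversions π)).card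
      = ∑ π ∈ derangementsF n, (-1 : ℤ) ^ inversions π := by
    rw [← Finset.sum_filter_add_sum_filter_not (derangementsF n) (fun π => Even (inversions π))]
    rw [Finset.sum_congr rfl (g := fun _ => (1:ℤ)) (fun π hπ => (Finset.mem_filter.mp hπ).2.neg_one_pow),
      Finset.sum_congr rfl (g := fun _ => (-1:ℤ)) (s₁ := (derangementsF n).filter fun π => ¬ Even (inversions π))
      (fun π hπ => (Nat.not_even_iff_odd.mp (Finset.mem_filter.mp hπ).2).neg_one_pow)]
    simp [sub_eq_add_neg]
  have h2 : ∑ π ∈ derangementsF n, (-1 : ℤ) ^ inversions π = (-1) ^ n * (1 - n) := by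
    rw [← det_J, Matrix.det_apply', derangementsF, Finset.sum_filter]
    refine Finset.sum_congr rfl fun π _ => ?_
    rw [sign_inversions]
    split_ifs with h
    · rw [Finset.prod_eq_one (fun i _ => by simp [h i]), mul_one]
      simp
    · push Not at h
      obtain ⟨i, hi⟩ := h
      rw [Finset.prod_eq_zero (Finset.mem_univ i), mul_zero]
      simp [hi]
  rw [h1, h2]
  obtain ⟨m, rfl⟩ : ∃ m, n = m + 1 := ⟨n - 1, by omega⟩
  simp [pow_succ]
end

section
/- For every integer n ≥ 1, ∑_{π ∈ S_n} (-1)^{inv(π)} ∏_{j ∈ RLMv(π)} x_j = (∏_{i ∈ [n], i odd} x_i)(∏_{j ∈ [n], j even} (x_j - 1)), as an identity of polynomials in the commuting variables x_1,…,x_n. -/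
open Finset MvPolynomial

/-- Insert the largest value at position `p`. -/
def insMax {n : ℕ} (p : Fin (n + 1)) (σ : Equiv.Perm (Fin n)) : Equiv.Perm (Fin (n + 1)) :=
  ((finSuccEquiv' p).trans (Equiv.optionCongr σ)).trans (finSuccEquiv' (Fin.last n)).symm

lemma insMax_self {n : ℕ} (p : Fin (n + 1)) (σ : Equiv.Perm (Fin n)) :
    insMax p σ p = Fin.last n := by
  simp [insMax]

lemma insMax_succAbove {n : ℕ} (p : Fin (n + 1)) (σ : Equiv.Perm (Fin n)) (i : Fin n) :
    insMax p σ (p.succAbove i) = (σ i).castSucc := by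
  simp [insMax]

lemma insMax_bij (n : ℕ) :
    Function.Bijective (fun q : Fin (n + 1) × Equiv.Perm (Fin n) => insMax q.1 q.2) := by
  rw [Fintype.bijective_iff_injective_and_card]
  constructor
  · rintro ⟨p, σ⟩ ⟨q, τ⟩ h
    simp only at h
    have hp : p = q := by
      apply (insMax q τ).injective
      rw [insMax_self, ← h, insMax_self]
    subst hp
    have : σ = τ := by
      ext i
      have := insMax_succAbove p σ i
      rw [h, insMax_succAbove] at this
      rw [Fin.castSucc_injective n this]
    rw [this]
  · simp [Fintype.card_perm, Nat.factorial_succ]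

lemma inversions_eq {n : ℕ} (π : Equiv.Perm (Fin n)) :
    inversions π = ∑ i, ∑ j, if i < j ∧ π j < π i then 1 else 0 := by
  rw [inversions, Finset.card_filter, Fintype.sum_prod_type]

lemma count_ge {n : ℕ} (p : Fin (n + 1)) :
    (∑ j : Fin n, if p ≤ j.castSucc then 1 else 0) = n - (p : ℕ) := by
  have h : ∀ m k : ℕ, (∑ j ∈ Finset.range m, if k ≤ j then 1 else 0) = m - k := by
    intro m k
    induction m with
    | zero => simp
    | succ m ih => rw [Finset.sum_range_succ, ih]; split_ifs <;> omega
  rw [← h n p, Finset.sum_range]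
  rfl

lemma inversions_insMax {n : ℕ} (p : Fin (n + 1)) (σ : Equiv.Perm (Fin n)) :
    inversions (insMax p σ) = (n - (p : ℕ)) + inversions σ := by
  rw [inversions_eq, inversions_eq, Fin.sum_univ_succAbove _ p, ← count_ge p]
  simp [Fin.sum_univ_succAbove _ p, insMax_self, insMax_succAbove, Fin.castSucc_lt_last,
    Fin.lt_succAbove_iff_le_castSucc, not_lt.2 (Fin.le_last _)]

lemma prod_RLMv {R : Type*} [CommRing R] {n : ℕ} (π : Equiv.Perm (Fin n)) (x : Fin n → R) :
    ∏ j ∈ RLMv π, x j = ∏ i, if ∀ j, i < j → π i < π j then x (π i) else 1 := by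
  rw [RLMv, Finset.prod_image (fun a _ b _ h => π.injective h), RLMi, Finset.prod_filter]

lemma prod_insMax {R : Type*} [CommRing R] {n : ℕ} (p : Fin (n + 1)) (σ : Equiv.Perm (Fin n))
    (x : Fin (n + 1) → R) :
    ∏ j ∈ RLMv (insMax p σ), x j =
      (if p = Fin.last n then x (Fin.last n) else 1) * ∏ j ∈ RLMv σ, x j.castSucc := by
  rw [prod_RLMv, prod_RLMv _ (fun j => x (Fin.castSucc j)), Fin.prod_univ_succAbove _ p]
  congr 1
  · rw [insMax_self]
    congr 1
    apply propext
    constructor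
    · intro h
      by_contra hp
      exact absurd (h (Fin.last n) (Fin.lt_last_iff_ne_last.2 hp)) (not_lt.2 (Fin.le_last _))
    · rintro rfl j hj
      exact absurd hj (not_lt.2 (Fin.le_last _))
  · refine Finset.prod_congr rfl fun i _ => ?_
    simp [Fin.forall_iff_succAbove p, insMax_self, insMax_succAbove, Fin.castSucc_lt_last]

lemma alt_sum {R : Type*} [CommRing R] (n : ℕ) :
    ∑ i ∈ Finset.range n, (-1 : R) ^ (n - i) = if Even n then 0 else -1 := by
  induction n with
  | zero => simp
  | succ n ih =>
    rw [Finset.sum_range_succ']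
    simp only [Nat.add_sub_add_right, ih, Nat.even_add_one, Nat.sub_zero, pow_succ]
    by_cases h : Even n
    · simp [h]
    · simp [h, (Nat.not_even_iff_odd.1 h).neg_one_pow]

lemma factor_sum {R : Type*} [CommRing R] (n : ℕ) (y : R) :
    ∑ p : Fin (n + 1), (-1 : R) ^ (n - (p : ℕ)) * (if p = Fin.last n then y else 1)
      = if Even n then y else y - 1 := by
  rw [Fin.sum_univ_castSucc]
  simp only [Fin.val_castSucc, (Fin.castSucc_lt_last _).ne, if_false, mul_one, Fin.val_last,
    if_true, Nat.sub_self, pow_zero, one_mul]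
  rw [← Finset.sum_range (fun i => (-1 : R) ^ (n - i)), alt_sum]
  split_ifs <;> ring

lemma main_aux {R : Type*} [CommRing R] (n : ℕ) (x : Fin n → R) :
    ∑ π : Equiv.Perm (Fin n), (-1 : R) ^ inversions π * ∏ j ∈ RLMv π, x j
      = ∏ j : Fin n, if Even (j : ℕ) then x j else x j - 1 := by
  induction n with
  | zero => simp [inversions, prod_RLMv]
  | succ n ih =>
    rw [← Function.Bijective.sum_comp (insMax_bij n), Fintype.sum_prod_type,
      Fin.prod_univ_castSucc]
    simp only [Fin.val_castSucc, Fin.val_last]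
    rw [← ih (fun j => x j.castSucc), ← factor_sum n (x (Fin.last n)), mul_comm,
      Finset.sum_mul_sum]
    refine Finset.sum_congr rfl fun p _ => Finset.sum_congr rfl fun σ _ => ?_
    rw [inversions_insMax, prod_insMax, pow_add]
    ring

/-- Here `Fin n` represents `[n]` via `i ↦ i + 1`, so `i ∈ [n]` is odd
iff `(i : ℕ) + 1` is odd. -/
theorem stmt11 (n : ℕ) (hn : 1 ≤ n) :
    ∑ π : Equiv.Perm (Fin n),
      ((-1 : MvPolynomial (Fin n) ℤ) ^ inversions π) * ∏ j ∈ RLMv π, X j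
    = (∏ i ∈ Finset.univ.filter (fun i : Fin n => Odd ((i : ℕ) + 1)),
          (X i : MvPolynomial (Fin n) ℤ))
        * ∏ j ∈ Finset.univ.filter (fun j : Fin n => Even ((j : ℕ) + 1)),
            ((X j : MvPolynomial (Fin n) ℤ) - 1) := by
  rw [main_aux, Finset.prod_filter, Finset.prod_filter, ← Finset.prod_mul_distrib]
  refine Finset.prod_congr rfl fun j _ => ?_
  by_cases h : Even (j : ℕ)
  · simp [Nat.even_add_one, h]
  · simp [Nat.even_add_one, h]
end

section
/- For every n ≥ 1 and every k with 1 ≤ k ≤ n, the number of even permutations of [n] with exactly k right-to-left minima minus the number of odd permutations of [n] with exactly k right-to-left minima equals (-1)^{n-k} · C(⌊n/2⌋, k - ⌈n/2⌉), where C denotes the binomial coefficient (equal to 0 when k - ⌈n/2⌉ is negative or exceeds ⌊n/2⌋). -/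
open Finset MvPolynomial

/-- Insert value `p` in front of the permutation `e`. -/
def insFront {n : ℕ} (x : Fin (n + 1) × Equiv.Perm (Fin n)) : Equiv.Perm (Fin (n + 1)) :=
  ((finSuccEquiv' (0 : Fin (n + 1))).trans (Equiv.optionCongr x.2)).trans (finSuccEquiv' x.1).symm

lemma insFront_zero {n : ℕ} (x : Fin (n + 1) × Equiv.Perm (Fin n)) : insFront x 0 = x.1 := by
  simp [insFront]

lemma insFront_succ {n : ℕ} (x : Fin (n + 1) × Equiv.Perm (Fin n)) (i : Fin n) :
    insFront x i.succ = x.1.succAbove (x.2 i) := by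
  have h : (finSuccEquiv' (0 : Fin (n + 1))) i.succ = some i := by
    rw [← Fin.succAbove_zero]; exact finSuccEquiv'_succAbove 0 i
  simp [insFront, h]

lemma insFront_bij (n : ℕ) : Function.Bijective (@insFront n) := by
  rw [Fintype.bijective_iff_injective_and_card]
  refine ⟨?_, ?_⟩
  · rintro ⟨p, e⟩ ⟨q, f⟩ h
    have h0 : p = q := by
      have := congrArg (fun s => s 0) h
      simpa [insFront_zero] using this
    subst h0
    have : e = f := by
      ext i
      have := congrArg (fun s => s i.succ) h
      simp only [insFront_succ] at this
      rw [Fin.succAbove_right_injective this]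
    rw [this]
  · simp [Fintype.card_perm, Nat.factorial_succ]

lemma RLM_eq {n : ℕ} (π : Equiv.Perm (Fin n)) :
    (RLMi π).card = ∑ i, if ∀ j, i < j → π i < π j then 1 else 0 := by
  rw [RLMi, Finset.card_filter]

lemma count_lt {n : ℕ} (p : Fin (n + 1)) (e : Equiv.Perm (Fin n)) :
    (∑ j, if p.succAbove (e j) < p then 1 else 0) = (p : ℕ) := by
  rw [Equiv.sum_comp e (fun j => if p.succAbove j < p then 1 else 0)]
  simp only [Fin.succAbove_lt_iff_castSucc_lt]
  rw [← Finset.card_filter]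
  have h := @Fin.card_filter_val_lt n p
  have hp := p.is_lt
  simp only [Fin.lt_def, Fin.val_castSucc]
  omega

lemma inversions_insFront {n : ℕ} (x : Fin (n + 1) × Equiv.Perm (Fin n)) :
    inversions (insFront x) = x.1 + inversions x.2 := by
  rw [inversions_eq, inversions_eq, Fin.sum_univ_succ]
  simp only [Fin.sum_univ_succ, insFront_zero, insFront_succ, Fin.succ_pos, Fin.succ_lt_succ_iff,
    Fin.succAbove_lt_succAbove_iff, true_and, Fin.not_lt_zero, false_and, lt_irrefl, if_false,
    zero_add, count_lt]

lemma RLM_insFront {n : ℕ} (x : Fin (n + 1) × Equiv.Perm (Fin n)) :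
    (RLMi (insFront x)).card = (if x.1 = 0 then 1 else 0) + (RLMi x.2).card := by
  rw [RLM_eq, RLM_eq, Fin.sum_univ_succ]
  simp only [Fin.forall_fin_succ, insFront_zero, insFront_succ, Fin.succ_pos, Fin.succ_lt_succ_iff,
    Fin.succAbove_lt_succAbove_iff, Fin.not_lt_zero, lt_irrefl, IsEmpty.forall_iff, true_and,
    forall_const]
  congr 2
  rw [eq_iff_iff]
  obtain ⟨p, e⟩ := x
  constructor
  · intro h
    by_contra hp
    have h1 := count_lt p e
    rw [Finset.sum_eq_zero (fun j _ => if_neg (not_lt.2 (h j).le))] at h1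
    exact hp (Fin.ext h1.symm)
  · rintro h j
    simp only at h
    subst h
    simp

/-- Signed generating polynomial. -/
noncomputable def sgnPoly (n : ℕ) : Polynomial ℤ :=
  ∑ π : Equiv.Perm (Fin n), (-1) ^ inversions π * Polynomial.X ^ (RLMi π).card

lemma sgnPoly_succ (n : ℕ) :
    sgnPoly (n + 1) = (Polynomial.X + ∑ p : Fin n, (-1) ^ ((p : ℕ) + 1)) * sgnPoly n := by
  rw [sgnPoly, ← (insFront_bij n).sum_comp, Fintype.sum_prod_type]
  simp only [inversions_insFront, RLM_insFront, pow_add]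
  rw [Fin.sum_univ_succ, add_mul, Finset.sum_mul, sgnPoly]
  congr 1
  · rw [Finset.mul_sum]
    refine Finset.sum_congr rfl fun e _ => ?_
    simp; ring
  · refine Finset.sum_congr rfl fun p _ => ?_
    rw [Finset.mul_sum]
    refine Finset.sum_congr rfl fun e _ => ?_
    simp [pow_succ]; ring

lemma alt_sum_s12 (n : ℕ) : (∑ p : Fin n, (-1 : Polynomial ℤ) ^ ((p : ℕ) + 1)) =
    if Even n then 0 else -1 := by
  rw [Fin.sum_univ_eq_sum_range (fun p => (-1 : Polynomial ℤ) ^ (p + 1))]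
  induction n with
  | zero => simp
  | succ n ih =>
    rw [Finset.sum_range_succ, ih]
    by_cases h : Even n
    · simp [h, pow_succ, Nat.even_add_one]
    · have : (-1 : Polynomial ℤ) ^ n = -1 := (Nat.not_even_iff_odd.1 h).neg_one_pow
      simp [h, pow_succ, this, Nat.even_add_one]

lemma sgnPoly_eq (n : ℕ) :
    sgnPoly n = (Polynomial.X + Polynomial.C (-1)) ^ (n / 2) * Polynomial.X ^ ((n + 1) / 2) := by
  induction n with
  | zero => simp [sgnPoly, inversions, RLMi]
  | succ n ih =>
    rw [sgnPoly_succ, alt_sum_s12, ih]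
    rcases Nat.even_or_odd' n with ⟨m, rfl | rfl⟩
    · have h1 : 2 * m / 2 = m := by omega
      have h2 : (2 * m + 1) / 2 = m := by omega
      have h3 : (2 * m + 1 + 1) / 2 = m + 1 := by omega
      rw [h1, h2, h3]
      simp; ring
    · have h2 : (2 * m + 1) / 2 = m := by omega
      have h3 : (2 * m + 1 + 1) / 2 = m + 1 := by omega
      have h4 : (2 * m + 1 + 1 + 1) / 2 = m + 1 := by omega
      rw [h2, h3, h4]
      simp; ring

lemma sgnPoly_coeff (n k : ℕ) :
    (sgnPoly n).coeff k = ((Finset.univ.filter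
        (fun π : Equiv.Perm (Fin n) => Even (inversions π) ∧ (RLMi π).card = k)).card : ℤ)
      - ((Finset.univ.filter
          (fun π : Equiv.Perm (Fin n) => ¬ Even (inversions π) ∧ (RLMi π).card = k)).card : ℤ) := by
  rw [sgnPoly, Polynomial.finsetSum_coeff, Finset.card_filter, Finset.card_filter]
  push_cast
  rw [← Finset.sum_sub_distrib]
  refine Finset.sum_congr rfl fun π _ => ?_
  by_cases h : Even (inversions π)
  · simp [h, Polynomial.coeff_X_pow, eq_comm]
  · have h' : (-1 : Polynomial ℤ) ^ (inversions π) = -1 := (Nat.not_even_iff_odd.1 h).neg_one_pow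
    rw [h']
    by_cases hk : (RLMi π).card = k
    · simp [h, hk]
    · simp [h, hk, Polynomial.coeff_X_pow, Ne.symm hk]

theorem stmt12 (n k : ℕ) (hn : 1 ≤ n) (hk1 : 1 ≤ k) (hk2 : k ≤ n) :
    ((Finset.univ.filter
        (fun π : Equiv.Perm (Fin n) => Even (inversions π) ∧ (RLMi π).card = k)).card : ℤ)
      - ((Finset.univ.filter
          (fun π : Equiv.Perm (Fin n) => ¬ Even (inversions π) ∧ (RLMi π).card = k)).card : ℤ)
    = (-1) ^ (n - k) *
        (if (n + 1) / 2 ≤ k then ((n / 2).choose (k - (n + 1) / 2) : ℤ) else 0) := by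
  rw [← sgnPoly_coeff, sgnPoly_eq, Polynomial.coeff_mul_X_pow']
  split_ifs with h
  · rw [Polynomial.coeff_X_add_C_pow]
    congr 2
    omega
  · simp
end

section
/- Let f : [n] → [n] be a subexcedant function and let σ = (n f(n)) ∘ ⋯ ∘ (2 f(2)) ∘ (1 f(1)) be the associated permutation, where (i j) denotes the transposition of i and j. Then the complement in [n] of the image of f equals the set of excedance values of σ: [n] \ supp(f) = EXCv(σ). In particular, exc(σ) = n - |supp(f)|. -/
open Finset

/-- The permutation `(n f(n)) ∘ ⋯ ∘ (2 f(2)) ∘ (1 f(1))` associated to a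
subexcedant function `f` (the transposition `(1 f(1))` is applied first). -/
def sefPerm {n : ℕ} (f : Fin n → Fin n) : Equiv.Perm (Fin n) :=
  ((List.ofFn fun i : Fin n => Equiv.swap i (f i)).reverse).prod

theorem sef_inv {n : ℕ} (f : Fin n → Fin n) (hf : ∀ i, f i ≤ i) (k : ℕ) (hk : k ≤ n) :
    ∃ P : Equiv.Perm (Fin n),
      (((List.ofFn fun i : Fin n => Equiv.swap i (f i)).take k).reverse).prod = P ∧
      (∀ v : Fin n, k ≤ v.1 → P.symm v = v) ∧
      (∀ v : Fin n, v.1 < k → (P.symm v).1 < k) ∧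
      (∀ v : Fin n, P.symm v < v ↔ v.1 < k ∧ ∀ i : Fin n, i.1 < k → f i ≠ v) := by
  induction k with
  | zero => exact ⟨1, by simp, fun v _ => rfl, by simp, fun v => by simp [Equiv.Perm.one_def]⟩
  | succ k ih =>
    obtain ⟨P, hP, ha, hb, hc⟩ := ih (by omega)
    have hkn : k < n := hk
    obtain ⟨K, hK⟩ : ∃ K : Fin n, K.1 = k := ⟨⟨k, hkn⟩, rfl⟩
    have hfK : (f K).1 ≤ k := by have := hf K; rw [Fin.le_def] at this; omega
    have hi : ∀ i : Fin n, i.1 < k + 1 ↔ (i.1 < k ∨ i = K) := by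
      intro i; rw [Fin.ext_iff]; omega
    have hPK : P.symm K = K := ha K hK.ge
    refine ⟨Equiv.swap K (f K) * P, ?_, ?_, ?_, ?_⟩
    · rw [← hP, List.take_add_one, List.getElem?_eq_getElem (by simpa using hkn)]
      subst hK
      simp
    all_goals
      intro v
      have hs : (Equiv.swap K (f K) * P).symm v = P.symm (Equiv.swap K (f K) v) := by
        rw [Equiv.symm_apply_eq]; simp
      rw [hs]
    · intro hv
      rw [Equiv.swap_apply_of_ne_of_ne, ha v (by omega)]
      · rintro rfl; omega
      · rintro rfl; omega
    · intro hv
      have key : ∀ w : Fin n, w.1 < k + 1 → (P.symm w).1 < k + 1 := by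
        intro w hw
        rcases (hi w).1 hw with h | rfl
        · have := hb w h; omega
        · rw [hPK]; exact hw
      apply key
      rw [Equiv.swap_apply_def]
      split_ifs <;> omega
    · simp only [hi]
      by_cases h2 : v = f K
      · subst h2
        rw [Equiv.swap_apply_right, hPK]
        constructor
        · intro h; exact absurd (hf K) (not_le.2 h)
        · rintro ⟨-, h⟩; exact absurd rfl (h K (Or.inr rfl))
      · by_cases h1 : v = K
        · subst h1
          rw [Equiv.swap_apply_left]
          have hlt : (f v).1 < k := by
            rcases hfK.lt_or_eq with h | h
            · exact h
            · exact absurd (Fin.ext (by omega)) h2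
          refine ⟨fun _ => ⟨Or.inr rfl, ?_⟩, fun _ => ?_⟩
          · rintro i (h | rfl) e
            · have := hf i
              rw [Fin.le_def, e] at this; omega
            · exact h2 e.symm
          · have := hb _ hlt
            rw [Fin.lt_def]; omega
        · rw [Equiv.swap_apply_of_ne_of_ne h1 h2, hc v]
          constructor
          · rintro ⟨h, h'⟩
            refine ⟨Or.inl h, ?_⟩
            rintro i (hh | rfl)
            · exact h' i hh
            · exact fun e => h2 e.symm
          · rintro ⟨h, h'⟩
            exact ⟨h.resolve_right h1, fun i hh => h' i (Or.inl hh)⟩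

theorem stmt13 (n : ℕ) (f : Fin n → Fin n) (hf : ∀ i, f i ≤ i) :
    Finset.univ \ Finset.univ.image f = EXCv (sefPerm f)
    ∧ (EXCi (sefPerm f)).card = n - (Finset.univ.image f).card := by
  obtain ⟨P, hP, -, -, hc⟩ := sef_inv f hf n le_rfl
  have hE : sefPerm f = P := by
    rw [← hP, sefPerm, List.take_of_length_le (by simp)]
  have h1 : Finset.univ \ Finset.univ.image f = EXCv (sefPerm f) := by
    rw [hE]
    ext v
    have hv := hc v
    simp only [Fin.is_lt, true_and, forall_const] at hv
    simp only [EXCv, EXCi, Finset.mem_sdiff, Finset.mem_image, Finset.mem_univ, true_and,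
      Finset.mem_filter, not_exists]
    rw [← hv]
    constructor
    · intro h; exact ⟨P.symm v, by simpa using h, by simp⟩
    · rintro ⟨i, h, rfl⟩; simpa using h
  refine ⟨h1, ?_⟩
  have h2 : (EXCv (sefPerm f)).card = (EXCi (sefPerm f)).card :=
    Finset.card_image_of_injective _ (sefPerm f).injective
  rw [← h2, ← h1, Finset.card_sdiff_of_subset (Finset.subset_univ _), Finset.card_univ,
    Fintype.card_fin]
end

section
/- Let π be a permutation of [n] and let f_π be the unique subexcedant function on [n] with π = (n f_π(n)) ∘ ⋯ ∘ (2 f_π(2)) ∘ (1 f_π(1)), where (i j) denotes the transposition of i and j. Then: (a) if i is a right-to-left minima index of π then π(i) = f_π(i); (b) the right-to-left minima values of π and of f_π coincide: RLMv(π) = RLMv(f_π); and (c) the right-to-left minima indices coincide: RLMi(π) = RLMi(f_π). -/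
open Finset

/-- Right-to-left minima indices of an arbitrary function `g : Fin n → Fin n`. -/
def RLMiF {n : ℕ} (g : Fin n → Fin n) : Finset (Fin n) :=
  Finset.univ.filter fun i => ∀ j, i < j → g i < g j

/-- Right-to-left minima values of an arbitrary function `g : Fin n → Fin n`. -/
def RLMvF {n : ℕ} (g : Fin n → Fin n) : Finset (Fin n) :=
  (RLMiF g).image g


theorem aux_up {n : ℕ} (f : Fin n → Fin n) (l : List (Fin n)) :
    ∀ v, l.Pairwise (· < ·) → (∀ k ∈ l, v < k) →
    (((∀ k ∈ l, f k ≠ v) ∧ ((l.map fun i => Equiv.swap i (f i)).reverse).prod v = v) ∨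
      ∃ k ∈ l, f k = v ∧ k ≤ ((l.map fun i => Equiv.swap i (f i)).reverse).prod v) := by
  induction l with
  | nil => intro v _ _; left; simp
  | cons a l ih =>
    intro v hp hv
    rw [List.pairwise_cons] at hp
    have hva : v < a := hv a (by simp)
    by_cases h : f a = v
    · right
      refine ⟨a, by simp, h, ?_⟩
      have e : ((List.map (fun i => Equiv.swap i (f i)) (a :: l)).reverse).prod v
          = ((l.map fun i => Equiv.swap i (f i)).reverse).prod a := by
        simp [h]
      rw [e]
      rcases ih a hp.2 hp.1 with h1 | ⟨k, hk, _, h2⟩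
      · exact h1.2.ge
      · exact (hp.1 k hk).le.trans h2
    · have e : ((List.map (fun i => Equiv.swap i (f i)) (a :: l)).reverse).prod v
          = ((l.map fun i => Equiv.swap i (f i)).reverse).prod v := by
        simp [Equiv.swap_apply_of_ne_of_ne hva.ne (Ne.symm h)]
      rw [e]
      rcases ih v hp.2 (fun k hk => hv k (by simp [hk])) with h1 | ⟨k, hk, h2⟩
      · left
        refine ⟨?_, h1.2⟩
        intro k hk
        rcases List.mem_cons.1 hk with rfl | hk
        · exact h
        · exact h1.1 k hk
      · right
        exact ⟨k, by simp [hk], h2⟩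

theorem aux_low {n : ℕ} (f : Fin n → Fin n) (hf : ∀ i, f i ≤ i) (l : List (Fin n)) (v : Fin n) :
    (∀ k ∈ l, k < v) → ((l.map fun i => Equiv.swap i (f i)).reverse).prod v = v := by
  induction l with
  | nil => simp
  | cons a l ih =>
    intro hv
    have hva : a < v := hv a (by simp)
    have h2 : v ≠ f a := ((hf a).trans_lt hva).ne'
    have := ih (fun k hk => hv k (by simp [hk]))
    simpa [Equiv.swap_apply_of_ne_of_ne hva.ne' h2] using this

theorem aux_main {n : ℕ} (f : Fin n → Fin n) (hf : ∀ i, f i ≤ i) (i : Fin n) :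
    ((∀ k, i < k → f k ≠ f i) ∧ sefPerm f i = f i) ∨
      ∃ k, i < k ∧ f k = f i ∧ k ≤ sefPerm f i := by
  obtain ⟨l1, l2, hl⟩ := List.append_of_mem (List.mem_finRange i)
  have hp : (List.finRange n).Pairwise (· < ·) := List.pairwise_lt_finRange n
  have hm : ∀ k, k ∈ l1 ∨ k = i ∨ k ∈ l2 := by
    intro k
    have := List.mem_finRange k
    rw [hl] at this
    simpa using this
  rw [hl, List.pairwise_append, List.pairwise_cons] at hp
  obtain ⟨-, ⟨hp1, hp2⟩, hp3⟩ := hp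
  have h1 : ∀ k ∈ l1, k < i := fun k hk => hp3 k hk i (by simp)
  have e : sefPerm f i = ((l2.map fun i => Equiv.swap i (f i)).reverse).prod (f i) := by
    unfold sefPerm
    rw [List.ofFn_eq_map, hl]
    have := aux_low f hf l1 i h1
    simp only [List.map_append, List.map_cons, List.reverse_append, List.reverse_cons,
      List.prod_append, List.prod_cons, List.prod_nil, Equiv.Perm.mul_apply, this, mul_one,
      Equiv.swap_apply_left]
  rw [e]
  rcases aux_up f l2 (f i) hp2 (fun k hk => (hf i).trans_lt (hp1 k hk)) with h | ⟨k, hk, h⟩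
  · left
    refine ⟨fun k hk => ?_, h.2⟩
    rcases hm k with h' | rfl | h'
    · exact absurd (h1 k h') hk.not_gt
    · exact absurd hk (lt_irrefl _)
    · exact h.1 k h'
  · right
    exact ⟨k, hp1 k hk, h⟩

theorem aux_last {n : ℕ} (f : Fin n → Fin n) (hf : ∀ i, f i ≤ i) (i : Fin n) :
    ∃ k, i ≤ k ∧ sefPerm f k = f i := by
  let S := Finset.univ.filter fun k => f k = f i
  have hi : i ∈ S := by simp [S]
  have hM := S.max'_mem ⟨i, hi⟩
  refine ⟨S.max' ⟨i, hi⟩, S.le_max' _ hi, ?_⟩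
  have hMf : f (S.max' ⟨i, hi⟩) = f i := by simpa [S] using (Finset.mem_filter.1 hM).2
  rcases aux_main f hf (S.max' ⟨i, hi⟩) with h | ⟨k, hk, h, _⟩
  · rw [h.2, hMf]
  · have : k ∈ S := by simp [S, h, hMf]
    exact absurd (S.le_max' k this) hk.not_ge

theorem stmt14 (n : ℕ) (f : Fin n → Fin n) (hf : ∀ i, f i ≤ i)
    (π : Equiv.Perm (Fin n)) (hπ : π = sefPerm f) :
    (∀ i ∈ RLMiF ⇑π, π i = f i)
    ∧ RLMvF ⇑π = RLMvF f
    ∧ RLMiF ⇑π = RLMiF f := by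
  subst hπ
  have ha : ∀ i ∈ RLMiF ⇑(sefPerm f), sefPerm f i = f i := by
    intro i hi
    have hi : ∀ j, i < j → sefPerm f i < sefPerm f j := by simpa [RLMiF] using hi
    obtain ⟨k, hk, e⟩ := aux_last f hf i
    rcases hk.eq_or_lt with rfl | hk
    · exact e
    · have h1 := hi k hk
      rw [e] at h1
      rcases aux_main f hf i with h | ⟨m, hm, _, h⟩
      · exact h.2
      · exact absurd (h1.trans_le (hf i)) (hm.trans_le h).not_gt
  have hge : ∀ i, f i ≤ sefPerm f i := by
    intro i
    rcases aux_main f hf i with h | ⟨m, hm, _, h⟩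
    · exact h.2.ge
    · exact (hf i).trans (hm.le.trans h)
  have hc : RLMiF ⇑(sefPerm f) = RLMiF f := by
    ext i
    constructor
    · intro hi
      have e := ha i hi
      have hi : ∀ j, i < j → sefPerm f i < sefPerm f j := by simpa [RLMiF] using hi
      simp only [RLMiF, Finset.mem_filter, Finset.mem_univ, true_and]
      intro j hj
      obtain ⟨k, hk, e'⟩ := aux_last f hf j
      have := hi k (hj.trans_le hk)
      rwa [e, e'] at this
    · intro hi
      have hi : ∀ j, i < j → f i < f j := by simpa [RLMiF] using hi
      simp only [RLMiF, Finset.mem_filter, Finset.mem_univ, true_and]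
      intro j hj
      rcases aux_main f hf i with h | ⟨m, hm, h, _⟩
      · rw [h.2]
        exact (hi j hj).trans_le (hge j)
      · exact absurd h (hi m hm).ne'
  refine ⟨ha, ?_, hc⟩
  unfold RLMvF
  rw [← hc]
  exact Finset.image_congr (fun i hi => ha i hi)
end

section
/- Let σ be a permutation of [n] and let f_σ be the unique subexcedant function on [n] with σ = (n f_σ(n)) ∘ ⋯ ∘ (2 f_σ(2)) ∘ (1 f_σ(1)), where (i j) denotes the transposition of i and j. Then σ is a derangement of [n] if and only if every fixed point of f_σ is multiple; that is, for every i with f_σ(i) = i there exists j > i with f_σ(j) = i. -/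
open Finset

/-- Partial product of the first `k` transpositions. -/
def sefPart {n : ℕ} (f : Fin n → Fin n) (k : ℕ) : Equiv.Perm (Fin n) :=
  (((List.ofFn fun i : Fin n => Equiv.swap i (f i)).take k).reverse).prod

lemma sefPart_succ {n : ℕ} (f : Fin n → Fin n) (k : ℕ) (h : k < n) :
    sefPart f (k + 1) = Equiv.swap ⟨k, h⟩ (f ⟨k, h⟩) * sefPart f k := by
  unfold sefPart
  rw [List.take_succ_eq_append_getElem (by simpa using h)]
  simp

lemma sefPart_fix {n : ℕ} (f : Fin n → Fin n) (hf : ∀ i, f i ≤ i) (k : ℕ) (hk : k ≤ n)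
    (i : Fin n) (hi : k ≤ i.val) : sefPart f k i = i := by
  induction k with
  | zero => simp [sefPart]
  | succ k ih =>
    rw [sefPart_succ f k hk, Equiv.Perm.mul_apply, ih (by omega) (by omega)]
    have h1 : (f ⟨k, hk⟩).val ≤ k := hf ⟨k, hk⟩
    apply Equiv.swap_apply_of_ne_of_ne
    · intro h; rw [h] at hi; simp at hi
    · intro h; rw [h] at hi; omega

lemma sefPart_iff {n : ℕ} (f : Fin n → Fin n) (hf : ∀ i, f i ≤ i) (k : ℕ) (hk : k ≤ n)
    (i : Fin n) (hi : i.val < k) :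
    sefPart f k i = i ↔ f i = i ∧ ∀ j : Fin n, i < j → j.val < k → f j ≠ i := by
  induction k with
  | zero => omega
  | succ k ih =>
    rw [sefPart_succ f k hk, Equiv.Perm.mul_apply]
    have hfix := sefPart_fix f hf k (by omega) ⟨k, hk⟩ le_rfl
    by_cases hik : i.val = k
    · have hi' : i = ⟨k, hk⟩ := Fin.ext hik
      subst hi'
      rw [hfix, Equiv.swap_apply_left]
      constructor
      · intro h
        refine ⟨h, fun j h1 h2 => ?_⟩
        rw [Fin.lt_def] at h1
        simp at h1
        omega
      · exact fun h => h.1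
    · have hne : i ≠ ⟨k, hk⟩ := fun h => hik (by rw [h])
      have ih' := ih (by omega) (by omega)
      have hPk : sefPart f k i ≠ ⟨k, hk⟩ := fun h =>
        hne ((sefPart f k).injective (h.trans hfix.symm))
      have key : Equiv.swap ⟨k, hk⟩ (f ⟨k, hk⟩) (sefPart f k i) = i ↔
          sefPart f k i = i ∧ f ⟨k, hk⟩ ≠ i := by
        rw [Equiv.swap_apply_def, if_neg hPk]
        split_ifs with h
        · rw [h]
          exact ⟨fun h => absurd h.symm hne, fun h => absurd h.1 h.2⟩
        · constructor
          · intro h2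
            exact ⟨h2, fun h3 => h (h2.trans h3.symm)⟩
          · exact fun h => h.1
      rw [key, ih']
      constructor
      · rintro ⟨⟨h1, h2⟩, h3⟩
        refine ⟨h1, fun j hj hjk => ?_⟩
        by_cases hj' : j.val = k
        · have : j = ⟨k, hk⟩ := Fin.ext hj'
          rw [this]; exact h3
        · exact h2 j hj (by omega)
      · rintro ⟨h1, h2⟩
        refine ⟨⟨h1, fun j hj hjk => h2 j hj (by omega)⟩, h2 ⟨k, hk⟩ ?_ (by simp)⟩
        rw [Fin.lt_def]
        simp only
        omega

theorem stmt16 (n : ℕ) (f : Fin n → Fin n) (hf : ∀ i, f i ≤ i) :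
    (∀ i, sefPerm f i ≠ i) ↔ (∀ i, f i = i → ∃ j, i < j ∧ f j = i) := by
  have hP : sefPart f n = sefPerm f := by
    unfold sefPart sefPerm
    rw [List.take_of_length_le (by simp)]
  have key : ∀ i, sefPerm f i = i ↔ f i = i ∧ ∀ j : Fin n, i < j → f j ≠ i := by
    intro i
    rw [← hP, sefPart_iff f hf n le_rfl i i.isLt]
    simp
  refine forall_congr' fun i => ?_
  rw [Ne, key]
  push Not
  rfl
end

section
/- Let n ≥ 1 and let E = {j_1 < j_2 < ⋯ < j_k} ⊆ [n-1]; write the complement [n] \ E = {i_1 < i_2 < ⋯ < i_{n-k}}. Define π_E by π_E(j_s) = j_s + 1 for each j_s ∈ E and π_E(i_r) = i_{r-1} + 1 for each i_r ∉ E (with i_0 = 0). Then π_E is a permutation of [n] with excedance index set EXCi(π_E) = E and inv(π_E) = |E|, and π_E is the unique permutation π of [n] with EXCi(π) = E whose values on excedances and anti-excedances are interleaved-sorted, i.e., j_1 < π(j_1) ≤ j_2 < π(j_2) ≤ ⋯ ≤ j_k < π(j_k) and π(i_1) ≤ i_1 < π(i_2) ≤ i_2 < ⋯ < π(i_{n-k})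 ≤ i_{n-k}. -/
open Finset MvPolynomial

/-- A permutation is "interleaved-sorted" (critical) if
`j_1 < π(j_1) ≤ j_2 < π(j_2) ≤ ⋯ ≤ j_k < π(j_k)` holds for its excedance
indices `j_1 < ⋯ < j_k` and
`π(i_1) ≤ i_1 < π(i_2) ≤ i_2 < ⋯ < π(i_{n-k}) ≤ i_{n-k}` holds for its
anti-excedance indices `i_1 < ⋯ < i_{n-k}`. -/
def InterleavedSorted {n : ℕ} (π : Equiv.Perm (Fin n)) : Prop :=
  (∀ a ∈ EXCi π, ∀ b ∈ EXCi π, a < b → π a ≤ b) ∧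
  (∀ a : Fin n, a ∉ EXCi π → ∀ b : Fin n, b ∉ EXCi π → a < b → a < π b)

/-- Here `Fin n` represents `[n]` via `i ↦ i + 1`.  The hypothesis `hE`
says `E ⊆ [n-1]`.  The second conjunct expresses `π(i_r) = i_{r-1} + 1`
(with `i_0 = 0`): for an anti-excedance position `i`, the (0-based) value of
`π` at `i` is one more than the largest element of the complement of `E`
below `i`, or `0` if there is none. -/
theorem stmt18 (n : ℕ) (hn : 1 ≤ n) (E : Finset (Fin n))
    (hE : ∀ j ∈ E, (j : ℕ) + 1 < n) :
    ∃ π : Equiv.Perm (Fin n),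
      (∀ j ∈ E, (π j : ℕ) = (j : ℕ) + 1) ∧
      (∀ i : Fin n, i ∉ E →
        (π i : ℕ) =
          (Finset.univ.filter fun p : Fin n => p < i ∧ p ∉ E).sup
            (fun p => (p : ℕ) + 1)) ∧
      EXCi π = E ∧
      inversions π = E.card ∧
      InterleavedSorted π ∧
      (∀ π' : Equiv.Perm (Fin n), EXCi π' = E → InterleavedSorted π' → π' = π) := by
  classical
  obtain ⟨g, hg⟩ : ∃ g : Fin n → ℕ, g = fun i =>
      (Finset.univ.filter fun p : Fin n => p < i ∧ p ∉ E).sup (fun p => (p : ℕ) + 1) := ⟨_, rfl⟩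
  have P1 : ∀ i p : Fin n, p < i → p ∉ E → (p : ℕ) + 1 ≤ g i := by
    intro i p hp hpE
    rw [hg]
    exact Finset.le_sup (f := fun p : Fin n => (p : ℕ) + 1) (by simp [hp, hpE])
  have P4 : ∀ (i : Fin n) (m : ℕ), (∀ p : Fin n, p < i → p ∉ E → (p : ℕ) + 1 ≤ m) → g i ≤ m := by
    intro i m h
    rw [hg]
    apply Finset.sup_le
    intro p hp
    simp only [Finset.mem_filter, Finset.mem_univ, true_and] at hp
    exact h p hp.1 hp.2
  have P2 : ∀ i : Fin n, g i ≤ i := fun i => P4 i i (fun p hp _ => hp)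
  have P3 : ∀ i : Fin n, g i = 0 ∨ ∃ p : Fin n, p < i ∧ p ∉ E ∧ g i = p + 1 := by
    intro i
    by_contra! h
    obtain ⟨h0, h1⟩ := h
    have := P4 i (g i - 1) (fun p hp hpE => by
      have h2 := P1 i p hp hpE
      have h3 := h1 p hp hpE
      omega)
    omega
  obtain ⟨f, hf1, hf2⟩ : ∃ f : Fin n → Fin n, (∀ j ∈ E, (f j : ℕ) = j + 1) ∧
      (∀ i, i ∉ E → (f i : ℕ) = g i) := by
    refine ⟨fun i => if h : i ∈ E then ⟨i + 1, hE i h⟩ else ⟨g i, (P2 i).trans_lt i.2⟩, ?_, ?_⟩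
    · intro j hj; simp [hj]
    · intro j hj; simp [hj]
  have hanti : ∀ a b : Fin n, a < b → a ∉ E → b ∉ E → f a ≠ f b := by
    intro a b hab ha hb h
    have h1 := hf2 a ha
    have h2 := hf2 b hb
    have h3 := P1 b a hab ha
    have h4 := P2 a
    rw [h] at h1
    omega
  have hmix : ∀ a b : Fin n, a ∈ E → b ∉ E → f a ≠ f b := by
    intro a b ha hb h
    have h1 := hf1 a ha
    have h2 := hf2 b hb
    rw [h] at h1
    rcases P3 b with h3 | ⟨p, _, hp, h3⟩
    · omega
    · have : p = a := Fin.ext (by omega)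
      exact hp (this ▸ ha)
  have hinj : Function.Injective f := by
    intro a b h
    by_cases ha : a ∈ E <;> by_cases hb : b ∈ E
    · have h1 := hf1 a ha
      have h2 := hf1 b hb
      rw [h] at h1
      exact Fin.ext (by omega)
    · exact absurd h (hmix a b ha hb)
    · exact absurd h.symm (hmix b a hb ha)
    · rcases lt_trichotomy a b with hab | hab | hab
      · exact absurd h (hanti a b hab ha hb)
      · exact hab
      · exact absurd h.symm (hanti b a hab hb ha)
  obtain ⟨π, hπ⟩ : ∃ π : Equiv.Perm (Fin n), ∀ i, π i = f i :=
    ⟨Equiv.ofBijective f (Finite.injective_iff_bijective.1 hinj), fun i => rfl⟩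
  have hexc : EXCi π = E := by
    ext i
    simp only [EXCi, Finset.mem_filter, Finset.mem_univ, true_and, hπ, Fin.lt_def]
    by_cases hi : i ∈ E
    · simp [hi, hf1 i hi]
    · have := P2 i
      simp [hi, hf2 i hi, this]
  refine ⟨π, fun j hj => by rw [hπ, hf1 j hj], fun i hi => by rw [hπ, hf2 i hi, hg], hexc, ?_, ?_, ?_⟩
  · have key : ∀ p q : Fin n, (p < q ∧ π q < π p) ↔
        (p ∈ E ∧ q ∉ E ∧ p < q ∧ ∀ r : Fin n, p < r → r < q → r ∈ E) := by
      intro p q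
      rw [hπ, hπ, Fin.lt_def, Fin.lt_def]
      constructor
      · rintro ⟨h1, h2⟩
        by_cases hq : q ∈ E
        · have h3 := hf1 q hq
          by_cases hp : p ∈ E
          · have h4 := hf1 p hp
            omega
          · have h4 := hf2 p hp
            have h5 := P2 p
            omega
        · have h3 := hf2 q hq
          by_cases hp : p ∈ E
          · have h4 := hf1 p hp
            refine ⟨hp, hq, h1, fun r hr hrq => ?_⟩
            by_contra hrE
            have h5 := P1 q r hrq hrE
            rw [Fin.lt_def] at hr
            omega
          · have h4 := hf2 p hp
            have h5 := P2 p
            have h6 := P1 q p h1 hp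
            omega
      · rintro ⟨hp, hq, h1, h2⟩
        have h3 := hf2 q hq
        have h4 := hf1 p hp
        refine ⟨h1, ?_⟩
        have : g q ≤ p := by
          apply P4
          intro r hr hrE
          by_contra hc
          have : p ≠ r := fun h => hrE (h ▸ hp)
          have h6 : (p : ℕ) ≠ r := fun h => this (Fin.ext h)
          exact hrE (h2 r (Fin.lt_def.2 (by omega)) hr)
        omega
    unfold inversions
    apply Finset.card_nbij Prod.fst
    · rintro ⟨p, q⟩ h
      exact ((key p q).1 (Finset.mem_filter.1 h).2).1
    · rintro ⟨p, q⟩ h ⟨p', q'⟩ h' heq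
      simp only [Finset.coe_filter, Set.mem_ofPred_eq, Finset.mem_univ, true_and, key] at h h'
      simp only at heq
      subst heq
      obtain ⟨-, hq, h1, h2⟩ := h
      obtain ⟨-, hq', h1', h2'⟩ := h'
      rcases lt_trichotomy q q' with h | h | h
      · exact absurd (h2' q h1 h) hq
      · rw [h]
      · exact absurd (h2 q' h1' h) hq'
    · intro p hp
      have hp' : p ∈ E := hp
      have hne : (Finset.univ.filter fun q : Fin n => p < q ∧ q ∉ E).Nonempty := by
        have hlast : (⟨n - 1, by omega⟩ : Fin n) ∉ E := fun h => by
          have := hE _ h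
          simp only at this
          omega
        have := hE p hp'
        refine ⟨⟨n - 1, by omega⟩, ?_⟩
        simp only [Finset.mem_filter, Finset.mem_univ, true_and]
        exact ⟨Fin.lt_def.2 (by simp only; omega), hlast⟩
      have hmin := Finset.min'_le (Finset.univ.filter fun q : Fin n => p < q ∧ q ∉ E)
      refine ⟨(p, Finset.min' _ hne), ?_, rfl⟩
      simp only [Finset.coe_filter, Set.mem_ofPred_eq, Finset.mem_univ, true_and, key]
      have hm := Finset.min'_mem _ hne
      simp only [Finset.mem_filter, Finset.mem_univ, true_and] at hm
      refine ⟨hp', hm.2, hm.1, fun r hr hrq => ?_⟩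
      by_contra hrE
      exact absurd (hmin r (by simp [hr, hrE])) (not_le.2 hrq)
  · rw [InterleavedSorted, hexc]
    constructor
    · intro a ha b _ hab
      rw [hπ, Fin.le_def, hf1 a ha]
      exact hab
    · intro a ha b hb hab
      rw [hπ, Fin.lt_def, hf2 b hb]
      exact P1 b a hab ha
  · intro π' he hs
    rw [InterleavedSorted, he] at hs
    have hle : ∀ x ∈ Finset.univ, (π x : ℕ) ≤ (π' x : ℕ) := by
      intro x _
      rw [hπ]
      by_cases hx : x ∈ E
      · rw [hf1 x hx]
        have : x ∈ EXCi π' := he ▸ hx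
        exact Fin.lt_def.1 (Finset.mem_filter.1 this).2
      · rw [hf2 x hx]
        exact P4 x _ (fun p hp hpE => hs.2 p hpE x hx hp)
    have hsum : ∑ x, (π x : ℕ) = ∑ x, (π' x : ℕ) := by
      rw [Equiv.sum_comp π (fun x : Fin n => (x : ℕ)), Equiv.sum_comp π' (fun x : Fin n => (x : ℕ))]
    have := (Finset.sum_eq_sum_iff_of_le hle).1 hsum
    ext x
    exact (this x (Finset.mem_univ x)).symm
end

section
/- Fix n ≥ 1 and let B_n be the word (1,1,2,2,3,3,…,n,n) of length 2n. A biderangement is a rearrangement w of the entries of B_n (a word w(1)⋯w(2n) whose multiset of letters is {1,1,2,2,…,n,n}) such that w(j) ≠ B_n(j) for all j ∈ [2n]. Then ∑_{w ∈ BD_n} (-1)^{inv(w)} ∏_{j ∈ EXCv(w)} x_j ∏_{j ∈ RLMv(w)} y_j = ∑_{π ∈ D_n} ∏_{j ∈ EXCv²(π)} x_j ∏_{j ∈ RLMv(π)} y_j, where BD_n is the set of biderangements of B_n, D_n is the set of derangements of [n], EXCv²(π) is the multiset obtained from EXCv(π) by repeating each element twice, and the products over multisets are taken with multiplicity. -/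
open Finset MvPolynomial

/-- The word `B_n = (1,1,2,2,…,n,n)`: here positions are `Fin (2*n)` and
letters are `Fin n` (representing `[n]` via `v ↦ v + 1`), so the letter at
(0-based) position `j` is `⌊j/2⌋`. -/
def Bword (n : ℕ) : Fin (2 * n) → Fin n :=
  fun j => ⟨(j : ℕ) / 2, by have := j.isLt; omega⟩

/-- Number of inversions of a word. -/
def invW {n : ℕ} (w : Fin (2 * n) → Fin n) : ℕ :=
  (Finset.univ.filter fun p : Fin (2 * n) × Fin (2 * n) =>
    p.1 < p.2 ∧ w p.2 < w p.1).card

/-- Right-to-left minima values of a word. -/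
def RLMvW {n : ℕ} (w : Fin (2 * n) → Fin n) : Finset (Fin n) :=
  (Finset.univ.filter fun i => ∀ j, i < j → w i < w j).image w

/-- The biderangements of `B_n`: rearrangements `w` of the entries of `B_n`
(every letter occurs exactly twice) with `w j ≠ B_n j` for all `j`. -/
def biderangements (n : ℕ) : Finset (Fin (2 * n) → Fin n) :=
  Finset.univ.filter fun w =>
    (∀ v : Fin n, (Finset.univ.filter fun j => w j = v).card = 2) ∧
    (∀ j, w j ≠ Bword n j)

def blk0 {n : ℕ} (i : Fin n) : Fin (2 * n) := ⟨2 * i.1, by omega⟩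
def blk1 {n : ℕ} (i : Fin n) : Fin (2 * n) := ⟨2 * i.1 + 1, by omega⟩

lemma Bword_blk0 {n : ℕ} (i : Fin n) : Bword n (blk0 i) = i := by
  ext; simp [Bword, blk0]
lemma Bword_blk1 {n : ℕ} (i : Fin n) : Bword n (blk1 i) = i := by
  ext; simp [Bword, blk1]; omega
lemma blk_cases {n : ℕ} (j : Fin (2 * n)) :
    j = blk0 (Bword n j) ∨ j = blk1 (Bword n j) := by
  simp only [Fin.ext_iff, Bword, blk0, blk1]; omega
lemma blk0_lt_blk1 {n : ℕ} (i : Fin n) : blk0 i < blk1 i := by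
  simp [blk0, blk1]
lemma Bword_fiber {n : ℕ} (i : Fin n) :
    (Finset.univ.filter fun j => Bword n j = i) = {blk0 i, blk1 i} := by
  ext j
  simp only [mem_filter, mem_univ, true_and, mem_insert, mem_singleton]
  constructor
  · rintro rfl; exact blk_cases j
  · rintro (rfl | rfl)
    · exact Bword_blk0 i
    · exact Bword_blk1 i

lemma Bword_fiber_card {n : ℕ} (i : Fin n) :
    (Finset.univ.filter fun j => Bword n j = i).card = 2 := by
  rw [Bword_fiber, Finset.card_pair (blk0_lt_blk1 i).ne]

lemma prod_Bword {n : ℕ} {M : Type*} [CommMonoid M] (f : Fin n → M) :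
    ∏ j, f (Bword n j) = ∏ i, f i ^ 2 := by
  rw [← Finset.prod_fiberwise Finset.univ (Bword n)]
  refine Finset.prod_congr rfl fun i _ => ?_
  rw [Finset.prod_congr rfl (g := fun _ => f i), Finset.prod_const, Bword_fiber_card]
  intro j hj
  rw [(mem_filter.1 hj).2]

/-- flip within a block -/
def flipB {n : ℕ} (j : Fin (2 * n)) : Fin (2 * n) :=
  if j = blk0 (Bword n j) then blk1 (Bword n j) else blk0 (Bword n j)

lemma Bword_flipB {n : ℕ} (j : Fin (2 * n)) : Bword n (flipB j) = Bword n j := by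
  unfold flipB; split_ifs <;> simp [Bword_blk0, Bword_blk1]

lemma flipB_ne {n : ℕ} (j : Fin (2 * n)) : flipB j ≠ j := by
  have h1 := blk0_lt_blk1 (Bword n j)
  have h2 := blk_cases j
  unfold flipB; split_ifs with h
  · intro h'; rw [h'] at h1; exact absurd h1 (by rw [← h]; exact lt_irrefl _)
  · exact fun h' => h h'.symm

lemma flipB_flipB {n : ℕ} (j : Fin (2 * n)) : flipB (flipB j) = j := by
  have h1 := flipB_ne j
  have h2 := flipB_ne (flipB j)
  have h3 := blk_cases j
  have h4 := blk_cases (flipB j)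
  have h5 := blk_cases (flipB (flipB j))
  rw [Bword_flipB] at h4
  rw [Bword_flipB, Bword_flipB] at h5
  grind

lemma Bword_lt {n : ℕ} {j k : Fin (2 * n)} (h : Bword n j < Bword n k) : j < k := by
  simp only [Bword, Fin.lt_def] at *; omega

lemma Bword_le {n : ℕ} {j k : Fin (2 * n)} (h : j ≤ k) : Bword n j ≤ Bword n k := by
  simp only [Bword, Fin.le_def] at *; omega

lemma dbl_sign {n : ℕ} {R : Type*} [CommRing R] (π : Equiv.Perm (Fin n)) :
    (-1 : R) ^ invW (fun j => π (Bword n j)) = 1 := by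
  unfold invW
  by_cases hR : (-1 : R) = 1
  · rw [hR, one_pow]
  rw [← Finset.prod_const]
  refine Finset.prod_involution (fun p _ => (p.1, flipB p.2)) ?_ ?_ ?_ ?_
  · intro a _; ring
  · intro a _ _ h
    exact flipB_ne a.2 (congrArg Prod.snd h)
  · intro a ha
    simp only [mem_filter, mem_univ, true_and, Bword_flipB] at ha ⊢
    refine ⟨Bword_lt ?_, ha.2⟩
    rw [Bword_flipB]
    refine lt_of_le_of_ne (Bword_le ha.1.le) ?_
    intro h; rw [h] at ha; exact lt_irrefl _ ha.2
  · intro a _; simp [flipB_flipB]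

lemma dbl_RLM {n : ℕ} (π : Equiv.Perm (Fin n)) :
    RLMvW (fun j => π (Bword n j)) = RLMv π := by
  ext v
  simp only [RLMvW, RLMv, RLMi, mem_image, mem_filter, mem_univ, true_and]
  constructor
  · rintro ⟨j, hj, rfl⟩
    refine ⟨Bword n j, fun k hk => ?_, rfl⟩
    have := hj (blk0 k) (Bword_lt (by rwa [Bword_blk0]))
    rwa [Bword_blk0] at this
  · rintro ⟨i, hi, rfl⟩
    refine ⟨blk1 i, fun k hk => ?_, by rw [Bword_blk1]⟩
    rw [Bword_blk1]
    apply hi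
    simp only [Bword, blk1, Fin.lt_def] at *; omega

lemma dbl_EXC {n : ℕ} {R : Type*} [CommRing R] (π : Equiv.Perm (Fin n)) (f : Fin n → R) :
    ∏ j ∈ Finset.univ.filter (fun j : Fin (2 * n) => Bword n j < π (Bword n j)),
      f (π (Bword n j)) = ∏ j ∈ EXCv π, f j ^ 2 := by
  rw [EXCv, Finset.prod_image (fun a _ b _ h => π.injective h), EXCi, Finset.prod_filter,
    Finset.prod_filter, prod_Bword (fun i => if i < π i then f (π i) else 1)]
  refine Finset.prod_congr rfl fun i _ => ?_
  split_ifs <;> simp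

/-- block `i` is the first non-constant block of `w` -/
def FirstBad {n : ℕ} (w : Fin (2 * n) → Fin n) (i : Fin n) : Prop :=
  w (blk0 i) ≠ w (blk1 i) ∧ ∀ k < i, w (blk0 k) = w (blk1 k)

lemma FirstBad.unique {n : ℕ} {w : Fin (2 * n) → Fin n} {i k : Fin n}
    (hi : FirstBad w i) (hk : FirstBad w k) : i = k := by
  rcases lt_trichotomy i k with h | h | h
  · exact absurd (hk.2 _ h) hi.1
  · exact h
  · exact absurd (hi.2 _ h) hk.1

lemma exists_firstBad {n : ℕ} {w : Fin (2 * n) → Fin n}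
    (h : ¬ ∀ i, w (blk0 i) = w (blk1 i)) : ∃ i, FirstBad w i := by
  push Not at h
  obtain ⟨i, hi, hm⟩ := WellFounded.has_min (wellFounded_lt (α := Fin n))
    {i | w (blk0 i) ≠ w (blk1 i)} h
  exact ⟨i, hi, fun k hk => by by_contra hc; exact hm k hc hk⟩

abbrev sw {n : ℕ} (i : Fin n) : Equiv.Perm (Fin (2 * n)) := Equiv.swap (blk0 i) (blk1 i)

lemma Bword_sw {n : ℕ} (i : Fin n) (j : Fin (2 * n)) : Bword n (sw i j) = Bword n j := by
  simp only [sw, Equiv.swap_apply_def]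
  split_ifs with h1 h2
  · rw [h1, Bword_blk0, Bword_blk1]
  · rw [h2, Bword_blk0, Bword_blk1]
  · rfl

lemma sw_lt {n : ℕ} (i : Fin n) {p q : Fin (2 * n)} (h : p < q)
    (hne : ¬ (p = blk0 i ∧ q = blk1 i)) : sw i p < sw i q := by
  simp only [sw, Equiv.swap_apply_def]
  split_ifs <;> simp only [blk0, blk1, Fin.ext_iff, Fin.lt_def] at * <;> omega

lemma sw_sw {n : ℕ} (i : Fin n) (p : Fin (2 * n)) : sw i (sw i p) = p :=
  Equiv.swap_apply_self ..

lemma FirstBad.sw {n : ℕ} {w : Fin (2 * n) → Fin n} {i : Fin n} (h : FirstBad w i) :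
    FirstBad (w ∘ sw i) i := by
  refine ⟨by simpa using h.1.symm, fun k hk => ?_⟩
  have h0 : _root_.sw i (blk0 k) = blk0 k := Equiv.swap_apply_of_ne_of_ne
    (by simp only [blk0, blk1, ne_eq, Fin.ext_iff, Fin.lt_def] at *; omega)
    (by simp only [blk0, blk1, ne_eq, Fin.ext_iff, Fin.lt_def] at *; omega)
  have h1 : _root_.sw i (blk1 k) = blk1 k := Equiv.swap_apply_of_ne_of_ne
    (by simp only [blk0, blk1, ne_eq, Fin.ext_iff, Fin.lt_def] at *; omega)
    (by simp only [blk0, blk1, ne_eq, Fin.ext_iff, Fin.lt_def] at *; omega)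
  simp only [Function.comp_apply, h0, h1]
  exact h.2 k hk

lemma inv_sw {n : ℕ} {w : Fin (2 * n) → Fin n} {i : Fin n} (h : w (blk0 i) < w (blk1 i)) :
    invW (w ∘ sw i) = invW w + 1 := by
  unfold invW
  have hE : (Finset.univ.filter fun p : Fin (2 * n) × Fin (2 * n) =>
      p.1 < p.2 ∧ (w ∘ sw i) p.2 < (w ∘ sw i) p.1)
      = insert (blk0 i, blk1 i) ((Finset.univ.filter fun p : Fin (2 * n) × Fin (2 * n) =>
        p.1 < p.2 ∧ w p.2 < w p.1).map ((sw i).prodCongr (sw i)).toEmbedding) := by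
    ext ⟨p, q⟩
    simp only [mem_filter, mem_univ, true_and, mem_insert, mem_map, Function.comp_apply,
      Prod.exists, Equiv.coe_toEmbedding, Equiv.prodCongr_apply, Prod.map, Prod.mk.injEq]
    constructor
    · rintro ⟨h1, h2⟩
      by_cases hc : p = blk0 i ∧ q = blk1 i
      · exact Or.inl hc
      · exact Or.inr ⟨sw i p, sw i q, ⟨sw_lt i h1 hc, h2⟩, sw_sw i p, sw_sw i q⟩
    · rintro (⟨rfl, rfl⟩ | ⟨a, b, ⟨h1, h2⟩, rfl, rfl⟩)
      · exact ⟨blk0_lt_blk1 i, by simpa using h⟩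
      · refine ⟨sw_lt i h1 ?_, by simpa only [sw_sw] using h2⟩
        rintro ⟨rfl, rfl⟩
        exact absurd h2 h.not_gt
  rw [hE, Finset.card_insert_of_notMem, Finset.card_map]
  simp only [mem_filter, mem_univ, true_and, mem_map,
      Prod.exists, Equiv.coe_toEmbedding, Equiv.prodCongr_apply, Prod.map, Prod.mk.injEq]
  rintro ⟨a, b, ⟨h1, h2⟩, ha, hb⟩
  have ha' : a = blk1 i := by rw [← sw_sw i a, ha]; simp
  have hb' : b = blk0 i := by rw [← sw_sw i b, hb]; simp
  subst ha' hb'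
  exact absurd h1 (blk0_lt_blk1 i).not_gt

lemma comp_sw_sw {n : ℕ} (w : Fin (2 * n) → Fin n) (i : Fin n) : (w ∘ sw i) ∘ sw i = w := by
  funext j; simp only [Function.comp_apply, sw_sw]

lemma sign_sw {n : ℕ} {R : Type*} [CommRing R] {w : Fin (2 * n) → Fin n} {i : Fin n}
    (h : w (blk0 i) ≠ w (blk1 i)) : (-1 : R) ^ invW (w ∘ sw i) = - (-1) ^ invW w := by
  rcases lt_or_gt_of_ne h with h | h
  · rw [inv_sw h]; ring
  · have := inv_sw (w := w ∘ sw i) (i := i) (by simpa using h)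
    rw [comp_sw_sw] at this
    rw [this]; ring

lemma RLM_sw_sub {n : ℕ} {w : Fin (2 * n) → Fin n} {i : Fin n}
    (h0 : ∃ j, blk1 i < j ∧ w j = w (blk0 i)) (h1 : ∃ j, blk1 i < j ∧ w j = w (blk1 i)) :
    RLMvW w ⊆ RLMvW (w ∘ sw i) := by
  intro v
  simp only [RLMvW, mem_image, mem_filter, mem_univ, true_and, Function.comp_apply]
  rintro ⟨p, hp, rfl⟩
  have n0 : p ≠ blk0 i := by
    rintro rfl
    obtain ⟨j, hj, hw⟩ := h0
    exact (hp j ((blk0_lt_blk1 i).trans hj)).ne hw.symm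
  have n1 : p ≠ blk1 i := by
    rintro rfl
    obtain ⟨j, hj, hw⟩ := h1
    exact (hp j hj).ne hw.symm
  have hs : sw i p = p := Equiv.swap_apply_of_ne_of_ne n0 n1
  refine ⟨p, fun j hj => ?_, by rw [hs]⟩
  rw [hs]
  apply hp
  have := sw_lt i hj (fun h => n0 h.1)
  rwa [hs] at this

lemma later {n : ℕ} {w : Fin (2 * n) → Fin n} {i : Fin n} (hb : FirstBad w i)
    (hc : ∀ v : Fin n, (Finset.univ.filter fun j => w j = v).card = 2)
    {p : Fin (2 * n)} (hp : Bword n p = i) : ∃ j, blk1 i < j ∧ w j = w p := by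
  have := hc (w p)
  obtain ⟨j, hj, hne⟩ := Finset.exists_mem_ne (by omega : 1 < (Finset.univ.filter fun j => w j = w p).card) p
  simp only [mem_filter, mem_univ, true_and] at hj
  refine ⟨j, ?_, hj⟩
  have hpc := blk_cases p
  have hjc := blk_cases j
  rw [hp] at hpc
  rcases lt_trichotomy (Bword n j) i with h | h | h
  · exfalso
    have e := hb.2 _ h
    have hsub : ({blk0 (Bword n j), blk1 (Bword n j), p} : Finset _) ⊆
        Finset.univ.filter fun j => w j = w p := by
      intro x; simp only [mem_insert, mem_singleton, mem_filter, mem_univ, true_and]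
      grind
    have hcard := Finset.card_le_card hsub
    have np0 : p ≠ blk0 (Bword n j) := by
      intro h'; rw [h', Bword_blk0] at hp; exact h.ne hp
    have np1 : p ≠ blk1 (Bword n j) := by
      intro h'; rw [h', Bword_blk1] at hp; exact h.ne hp
    rw [Finset.card_eq_three.2 ⟨_, _, _, (blk0_lt_blk1 _).ne, np0.symm, np1.symm, rfl⟩] at hcard
    omega
  · exfalso
    have := hb.1
    rw [h] at hjc
    grind
  · exact Bword_lt (by rwa [Bword_blk1])

lemma count_sw {n : ℕ} {w : Fin (2 * n) → Fin n} (i : Fin n)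
    (hc : ∀ v : Fin n, (Finset.univ.filter fun j => w j = v).card = 2) (v : Fin n) :
    (Finset.univ.filter fun j => (w ∘ sw i) j = v).card = 2 := by
  refine Eq.trans ?_ (hc v)
  refine Finset.card_equiv (sw i) fun j => ?_
  simp

lemma RLM_sw {n : ℕ} {w : Fin (2 * n) → Fin n} {i : Fin n} (hb : FirstBad w i)
    (hc : ∀ v : Fin n, (Finset.univ.filter fun j => w j = v).card = 2) :
    RLMvW (w ∘ sw i) = RLMvW w := by
  apply Finset.Subset.antisymm
  · have := RLM_sw_sub (later hb.sw (count_sw i hc) (Bword_blk0 i))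
      (later hb.sw (count_sw i hc) (Bword_blk1 i))
    rwa [comp_sw_sw] at this
  · exact RLM_sw_sub (later hb hc (Bword_blk0 i)) (later hb hc (Bword_blk1 i))

lemma EXC_sw {n : ℕ} {R : Type*} [CommRing R] (w : Fin (2 * n) → Fin n) (i : Fin n)
    (f : Fin n → R) :
    ∏ j ∈ Finset.univ.filter (fun j : Fin (2 * n) => Bword n j < (w ∘ sw i) j),
      f ((w ∘ sw i) j) =
    ∏ j ∈ Finset.univ.filter (fun j : Fin (2 * n) => Bword n j < w j), f (w j) := by
  rw [Finset.prod_filter, Finset.prod_filter]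
  refine Fintype.prod_equiv (sw i) _ _ fun j => ?_
  simp only [Function.comp_apply, Bword_sw]

open Classical in
/-- the sign-reversing involution -/
noncomputable def invol {n : ℕ} (w : Fin (2 * n) → Fin n) : Fin (2 * n) → Fin n :=
  if h : ∃ i, FirstBad w i then w ∘ sw h.choose else w

lemma invol_eq {n : ℕ} {w : Fin (2 * n) → Fin n} {i : Fin n} (h : FirstBad w i) :
    invol w = w ∘ sw i := by
  have h' : ∃ i, FirstBad w i := ⟨i, h⟩
  rw [invol, dif_pos h', h'.choose_spec.unique h]

/-- `X (Sum.inl v)` is `x_{v+1}` and `X (Sum.inr v)` is `y_{v+1}`.  The product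
over the multiset `EXCv(w)` (with multiplicity) is realised as the product of
`x_{w j}` over the excedance positions `j`, and the product over the multiset
`EXCv²(π)` as the product of `x_j²` over the excedance values `j` of `π`. -/
theorem stmt19 (n : ℕ) (hn : 1 ≤ n) :
    ∑ w ∈ biderangements n,
      ((-1 : MvPolynomial (Fin n ⊕ Fin n) ℤ) ^ invW w)
        * (∏ j ∈ Finset.univ.filter (fun j : Fin (2 * n) => Bword n j < w j),
            X (Sum.inl (w j)))
        * (∏ v ∈ RLMvW w, X (Sum.inr v))
    = ∑ π ∈ derangementsF n,
        (∏ j ∈ EXCv π, (X (Sum.inl j) : MvPolynomial (Fin n ⊕ Fin n) ℤ) ^ 2)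
          * (∏ v ∈ RLMv π, X (Sum.inr v)) := by
  rw [← Finset.sum_filter_add_sum_filter_not (biderangements n)
    (fun w => ∀ i, w (blk0 i) = w (blk1 i))]
  have hz : ∑ w ∈ (biderangements n).filter (fun w => ¬ ∀ i, w (blk0 i) = w (blk1 i)),
      ((-1 : MvPolynomial (Fin n ⊕ Fin n) ℤ) ^ invW w)
        * (∏ j ∈ Finset.univ.filter (fun j : Fin (2 * n) => Bword n j < w j),
            X (Sum.inl (w j)))
        * (∏ v ∈ RLMvW w, X (Sum.inr v)) = 0 := by
    refine Finset.sum_involution (fun w _ => invol w) ?_ ?_ ?_ ?_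
    · intro w hw
      obtain ⟨hw, hd⟩ := mem_filter.1 hw
      obtain ⟨i, hi⟩ := exists_firstBad hd
      have hc := (mem_filter.1 hw).2.1
      rw [invol_eq hi, RLM_sw hi hc, sign_sw hi.1, EXC_sw w i (fun v => X (Sum.inl v))]
      ring
    · intro w hw _ he
      obtain ⟨hw, hd⟩ := mem_filter.1 hw
      obtain ⟨i, hi⟩ := exists_firstBad hd
      rw [invol_eq hi] at he
      have := congrFun he (blk0 i)
      simp only [Function.comp_apply, Equiv.swap_apply_left] at this
      exact hi.1 this.symm
    · intro w hw
      obtain ⟨hw, hd⟩ := mem_filter.1 hw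
      obtain ⟨i, hi⟩ := exists_firstBad hd
      obtain ⟨-, hc, hne⟩ := mem_filter.1 hw
      rw [invol_eq hi]
      refine mem_filter.2 ⟨mem_filter.2 ⟨mem_univ _, count_sw i hc, fun j => ?_⟩,
        fun h => hi.sw.1 (h i)⟩
      have := hne (sw i j)
      rwa [Bword_sw] at this
    · intro w hw
      obtain ⟨hw, hd⟩ := mem_filter.1 hw
      obtain ⟨i, hi⟩ := exists_firstBad hd
      simp only [invol_eq hi, invol_eq hi.sw, comp_sw_sw]
  rw [hz, add_zero]
  symm
  refine Finset.sum_bij (fun π _ => fun j => π (Bword n j)) ?_ ?_ ?_ ?_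
  · intro π hπ
    have hd := (mem_filter.1 hπ).2
    refine mem_filter.2 ⟨mem_filter.2 ⟨mem_univ _, fun v => ?_, fun j => hd _⟩, fun i => ?_⟩
    · refine Eq.trans ?_ (Bword_fiber_card (π.symm v))
      congr 1
      ext j
      simp [Equiv.eq_symm_apply]
    · simp only [Bword_blk0, Bword_blk1]
  · intro π _ ρ _ h
    ext1 i
    have := congrFun h (blk0 i)
    simpa only [Bword_blk0] using this
  · intro w hw
    obtain ⟨hw, hd⟩ := mem_filter.1 hw
    obtain ⟨-, hc, hne⟩ := mem_filter.1 hw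
    have hB : ∀ j, w (blk0 (Bword n j)) = w j := by
      intro j
      rcases blk_cases j with h | h
      · rw [← h]
      · rw [hd, ← h]
    have hs : Function.Surjective (fun i => w (blk0 i)) := by
      intro v
      have h2 := hc v
      obtain ⟨j, hj⟩ := Finset.card_pos.1 (by omega : 0 < (Finset.univ.filter fun j => w j = v).card)
      exact ⟨Bword n j, (hB j).trans (mem_filter.1 hj).2⟩
    refine ⟨Equiv.ofBijective _ (Finite.injective_iff_bijective.1
      (Finite.injective_iff_surjective.2 hs)), mem_filter.2 ⟨mem_univ _, fun i => ?_⟩, ?_⟩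
    · have := hne (blk0 i)
      rwa [Bword_blk0] at this
    · funext j
      exact hB j
  · intro π _
    simp only [dbl_sign, dbl_RLM, one_mul]
    rw [dbl_EXC π (fun v => (X (Sum.inl v) : MvPolynomial (Fin n ⊕ Fin n) ℤ))]
end
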